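/- Let Γ be a group and R a Γ-graded ring. There exist a Γ-graded division ring K and a homomorphism of Γ-graded rings φ : R → K if and only if no identity matrix can be expressed as an iterated determinantal sum of square homogeneous matrices over R that are not gr-full. -/

import Mathlib

open Matrix

universe u v w

section GradedDefs

variable {Γ : Type u} [Group Γ] {R : Type v} [Ring R]

/-- `A` is a homogeneous matrix of distribution `(α, β)`:
its `(i,j)` entry lies in `𝒜 (α i * (β j)⁻¹)`. -/
def IsHomog (𝒜 : Γ → AddSubgroup R) {m n : ℕ}
    (A : Matrix (Fin m) (Fin n) R) (α : Fin m → Γ) (β : Fin n → Γ) : Prop :=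
  ∀ i j, A i j ∈ 𝒜 (α i * (β j)⁻¹)

/-- `A` is a homogeneous matrix for some distribution. -/
def IsHomogSq (𝒜 : Γ → AddSubgroup R) {m n : ℕ}
    (A : Matrix (Fin m) (Fin n) R) : Prop :=
  ∃ (α : Fin m → Γ) (β : Fin n → Γ), IsHomog 𝒜 A α β

end GradedDefs

/-- Square matrices over `R` of arbitrary finite size. -/
abbrev SqMat (R : Type v) : Type v := Σ n : ℕ, Matrix (Fin n) (Fin n) R

section GradedDefs

variable {Γ : Type u} [Group Γ] {R : Type v} [Ring R]

/-- Diagonal sum `A ⊕ B` of two (rectangular) matrices. -/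
def diagSum {m n m' n' : ℕ} (A : Matrix (Fin m) (Fin n) R)
    (B : Matrix (Fin m') (Fin n') R) : Matrix (Fin (m + m')) (Fin (n + n')) R :=
  Matrix.reindex finSumFinEquiv finSumFinEquiv (Matrix.fromBlocks A 0 0 B)

/-- Block lower triangular matrix `[[A, 0], [C, B]]`. -/
def lowerBlockSum {n m : ℕ} (A : Matrix (Fin n) (Fin n) R) (B : Matrix (Fin m) (Fin m) R)
    (C : Matrix (Fin m) (Fin n) R) : Matrix (Fin (n + m)) (Fin (n + m)) R :=
  Matrix.reindex finSumFinEquiv finSumFinEquiv (Matrix.fromBlocks A 0 C B)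

/-- Block upper triangular matrix `[[A, C], [0, B]]` with rectangular blocks. -/
def upperBlockSum {m n m' n' : ℕ} (A : Matrix (Fin m) (Fin n) R)
    (B : Matrix (Fin m') (Fin n') R) (C : Matrix (Fin m) (Fin n') R) :
    Matrix (Fin (m + m')) (Fin (n + n')) R :=
  Matrix.reindex finSumFinEquiv finSumFinEquiv (Matrix.fromBlocks A C 0 B)

/-- `C` is the determinantal sum of `A` and `B` with respect to some column or row:
`A` and `B` agree away from that column (row) and the distinguished column (row) of `C`
is the sum of the corresponding columns (rows) of `A` and `B`. -/
def IsDetSum {n : ℕ} (A B C : Matrix (Fin n) (Fin n) R) : Prop :=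
  (∃ c : Fin n, (∀ i j, j ≠ c → A i j = B i j) ∧
      ∀ i j, C i j = if j = c then A i j + B i j else A i j) ∨
  (∃ r : Fin n, (∀ i j, i ≠ r → A i j = B i j) ∧
      ∀ i j, C i j = if i = r then A i j + B i j else A i j)

/-- `C` is the determinantal sum of the homogeneous matrices `A` and `B`
(which have a common distribution). -/
def GrDetSum (𝒜 : Γ → AddSubgroup R) {n : ℕ} (A B C : Matrix (Fin n) (Fin n) R) : Prop :=
  (∃ α β : Fin n → Γ, IsHomog 𝒜 A α β ∧ IsHomog 𝒜 B α β) ∧ IsDetSum A B C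

/-- A square homogeneous matrix `A` is gr-full if whenever `A = P * Q` with `P`
homogeneous of distribution `(α, lam)` and `Q` homogeneous of distribution `(lam, β)`
where `lam` has length `r`, then `r ≥ n`. -/
def IsGrFull (𝒜 : Γ → AddSubgroup R) {n : ℕ} (A : Matrix (Fin n) (Fin n) R) : Prop :=
  ∀ (r : ℕ) (P : Matrix (Fin n) (Fin r) R) (Q : Matrix (Fin r) (Fin n) R)
    (α : Fin n → Γ) (lam : Fin r → Γ) (β : Fin n → Γ),
    IsHomog 𝒜 P α lam → IsHomog 𝒜 Q lam β → A = P * Q → n ≤ r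

/-- gr-prime matrix ideal: a set of square homogeneous matrices satisfying (PM1)–(PM6). -/
structure IsGrPrimeMatrixIdeal (𝒜 : Γ → AddSubgroup R) (P : Set (SqMat R)) : Prop where
  subset_homog : ∀ p ∈ P, IsHomogSq 𝒜 p.2
  pm1 : ∀ {n : ℕ} (A : Matrix (Fin n) (Fin n) R),
    IsHomogSq 𝒜 A → ¬ IsGrFull 𝒜 A → (⟨n, A⟩ : SqMat R) ∈ P
  pm2 : ∀ {n : ℕ} (A B C : Matrix (Fin n) (Fin n) R),
    (⟨n, A⟩ : SqMat R) ∈ P → (⟨n, B⟩ : SqMat R) ∈ P → GrDetSum 𝒜 A B C →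
    (⟨n, C⟩ : SqMat R) ∈ P
  pm3 : ∀ {m n : ℕ} (A : Matrix (Fin m) (Fin m) R) (B : Matrix (Fin n) (Fin n) R),
    (⟨m, A⟩ : SqMat R) ∈ P → IsHomogSq 𝒜 B → (⟨m + n, diagSum A B⟩ : SqMat R) ∈ P
  pm4 : ∀ {m n : ℕ} (A : Matrix (Fin m) (Fin m) R) (B : Matrix (Fin n) (Fin n) R),
    IsHomogSq 𝒜 A → IsHomogSq 𝒜 B → (⟨m + n, diagSum A B⟩ : SqMat R) ∈ P →
    (⟨m, A⟩ : SqMat R) ∈ P ∨ (⟨n, B⟩ : SqMat R) ∈ P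
  pm5 : (⟨1, (1 : Matrix (Fin 1) (Fin 1) R)⟩ : SqMat R) ∉ P
  pm6 : ∀ {n : ℕ} (A : Matrix (Fin n) (Fin n) R) (e f : Equiv.Perm (Fin n)),
    (⟨n, A⟩ : SqMat R) ∈ P → (⟨n, A.submatrix ⇑e ⇑f⟩ : SqMat R) ∈ P

/-- gr-matrix ideal: a set of square homogeneous matrices satisfying (I1)–(I5). -/
structure IsGrMatrixIdeal (𝒜 : Γ → AddSubgroup R) (I : Set (SqMat R)) : Prop where
  subset_homog : ∀ p ∈ I, IsHomogSq 𝒜 p.2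
  i1 : ∀ {n : ℕ} (A : Matrix (Fin n) (Fin n) R),
    IsHomogSq 𝒜 A → ¬ IsGrFull 𝒜 A → (⟨n, A⟩ : SqMat R) ∈ I
  i2 : ∀ {n : ℕ} (A B C : Matrix (Fin n) (Fin n) R),
    (⟨n, A⟩ : SqMat R) ∈ I → (⟨n, B⟩ : SqMat R) ∈ I → GrDetSum 𝒜 A B C →
    (⟨n, C⟩ : SqMat R) ∈ I
  i3 : ∀ {m n : ℕ} (A : Matrix (Fin m) (Fin m) R) (B : Matrix (Fin n) (Fin n) R),
    (⟨m, A⟩ : SqMat R) ∈ I → IsHomogSq 𝒜 B → (⟨m + n, diagSum A B⟩ : SqMat R) ∈ I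
  i4 : ∀ {n : ℕ} (A : Matrix (Fin n) (Fin n) R) (e f : Equiv.Perm (Fin n)),
    (⟨n, A⟩ : SqMat R) ∈ I → (⟨n, A.submatrix ⇑e ⇑f⟩ : SqMat R) ∈ I
  i5 : ∀ {n : ℕ} (A : Matrix (Fin n) (Fin n) R),
    (⟨n + 1, diagSum A (1 : Matrix (Fin 1) (Fin 1) R)⟩ : SqMat R) ∈ I →
    (⟨n, A⟩ : SqMat R) ∈ I

/-- The diagonal sum of `r` copies of `A`. -/
def diagIter {n : ℕ} (A : Matrix (Fin n) (Fin n) R) :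
    (r : ℕ) → Matrix (Fin (n * r)) (Fin (n * r)) R
  | 0 => 0
  | r + 1 => diagSum (diagIter A r) A

/-- Iterated determinantal sums (with arbitrary bracketing) of elements of `W`. -/
inductive IsDetSumOf (𝒜 : Γ → AddSubgroup R) (W : Set (SqMat R)) : SqMat R → Prop
  | base (p : SqMat R) (hp : p ∈ W) : IsDetSumOf 𝒜 W p
  | step {n : ℕ} (A B C : Matrix (Fin n) (Fin n) R)
      (hA : IsDetSumOf 𝒜 W ⟨n, A⟩) (hB : IsDetSumOf 𝒜 W ⟨n, B⟩)
      (h : GrDetSum 𝒜 A B C) : IsDetSumOf 𝒜 W ⟨n, C⟩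

/-- The homogeneous rational closure of degree `γ`: entries `(j,i)` of inverses of matrices
`A^f` with `A ∈ Sig` homogeneous of distribution `(α, β)` and `β j * (α i)⁻¹ = γ`. -/
def RatCl (𝒜 : Γ → AddSubgroup R) {S : Type w} [Ring S] (Sig : Set (SqMat R)) (f : R →+* S)
    (γ : Γ) : Set S :=
  {x | ∃ (n : ℕ) (A : Matrix (Fin n) (Fin n) R) (α β : Fin n → Γ) (i j : Fin n)
        (B : Matrix (Fin n) (Fin n) S),
      (⟨n, A⟩ : SqMat R) ∈ Sig ∧ IsHomog 𝒜 A α β ∧ β j * (α i)⁻¹ = γ ∧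
      (A.map ⇑f) * B = 1 ∧ B * (A.map ⇑f) = 1 ∧ B j i = x}

/-- gr-lower semimultiplicative set of square homogeneous matrices. -/
def IsGrLowerSemimult (𝒜 : Γ → AddSubgroup R) (Sig : Set (SqMat R)) : Prop :=
  ((⟨1, (1 : Matrix (Fin 1) (Fin 1) R)⟩ : SqMat R) ∈ Sig) ∧
  ∀ {n m : ℕ} (A : Matrix (Fin n) (Fin n) R) (B : Matrix (Fin m) (Fin m) R)
    (α β : Fin n → Γ) (α' β' : Fin m → Γ) (C : Matrix (Fin m) (Fin n) R),
    (⟨n, A⟩ : SqMat R) ∈ Sig → (⟨m, B⟩ : SqMat R) ∈ Sig →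
    IsHomog 𝒜 A α β → IsHomog 𝒜 B α' β' → IsHomog 𝒜 C α' β →
    (⟨n + m, lowerBlockSum A B C⟩ : SqMat R) ∈ Sig

end GradedDefs

/-- A homomorphism of `Γ`-graded rings from `(R, 𝒜)` to a `Γ`-graded division ring. -/
structure GrDivRingHom (Γ : Type u) [Group Γ] [DecidableEq Γ] (R : Type v) [Ring R]
    (𝒜 : Γ → AddSubgroup R) where
  K : Type (max u v)
  [ringK : Ring K]
  [nontrivialK : Nontrivial K]
  grading : Γ → AddSubgroup K
  internal : DirectSum.IsInternal grading
  one_mem : (1 : K) ∈ grading 1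
  mul_mem : ∀ {γ δ : Γ} {x y : K}, x ∈ grading γ → y ∈ grading δ → x * y ∈ grading (γ * δ)
  isUnit_of_ne : ∀ {γ : Γ} {x : K}, x ∈ grading γ → x ≠ 0 → IsUnit x
  φ : R →+* K
  map_mem : ∀ {γ : Γ} {r : R}, r ∈ 𝒜 γ → φ r ∈ grading γ

attribute [instance] GrDivRingHom.ringK GrDivRingHom.nontrivialK



section PartA

/-- Homogeneous matrices indexed by arbitrary types. -/
def HG {Γ : Type u} [Group Γ] {R : Type v} [Ring R] (𝒜 : Γ → AddSubgroup R) {m n : Type*}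
    (A : Matrix m n R) (α : m → Γ) (β : n → Γ) : Prop :=
  ∀ i j, A i j ∈ 𝒜 (α i * (β j)⁻¹)

variable {Γ : Type u} [Group Γ] [DecidableEq Γ] {K : Type v} [Ring K] [Nontrivial K]

theorem homog_inv (𝒦 : Γ → AddSubgroup K) (hintl : DirectSum.IsInternal 𝒦)
    (hone : (1 : K) ∈ 𝒦 1)
    (hmul : ∀ {γ δ : Γ} {x y : K}, x ∈ 𝒦 γ → y ∈ 𝒦 δ → x * y ∈ 𝒦 (γ * δ))
    {γ : Γ} {x : K} (hx : x ∈ 𝒦 γ) (hu : IsUnit x) :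
    ∃ y ∈ 𝒦 γ⁻¹, x * y = 1 ∧ y * x = 1 := by
  obtain ⟨⟨x, y, hxy, hyx⟩, rfl⟩ := hu
  change x ∈ _ at hx
  let 𝒦' : Additive Γ → AddSubgroup K := fun a => 𝒦 a.toMul
  have : SetLike.GradedMonoid 𝒦' :=
    { one_mem := hone, mul_mem := fun _ _ _ _ h1 h2 => hmul h1 h2 }
  let _ : DirectSum.Decomposition 𝒦' :=
    DirectSum.IsInternal.chooseDecomposition (M := K) (ℳ := 𝒦') hintl
  let _ : GradedRing 𝒦' := { }
  have h := DirectSum.coe_decompose_mul_add_of_left_mem 𝒦' (i := Additive.ofMul γ)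
    (j := Additive.ofMul γ⁻¹) (a := x) (b := y) hx
  have h0 : (Additive.ofMul γ + Additive.ofMul γ⁻¹ : Additive Γ) = 0 := by
    rw [← ofMul_mul]; simp
  rw [hxy, h0, DirectSum.decompose_of_mem_same 𝒦' (show (1 : K) ∈ 𝒦' 0 from hone)] at h
  set z : K := (DirectSum.decompose 𝒦' y (Additive.ofMul γ⁻¹) : K) with hz
  have hzm : z ∈ 𝒦 γ⁻¹ := (DirectSum.decompose 𝒦' y (Additive.ofMul γ⁻¹)).2
  have : z = y := by
    calc z = y * x * z := by rw [hyx, one_mul]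
      _ = y := by rw [mul_assoc, ← h, mul_one]
  exact ⟨z, hzm, h.symm, by rw [this]; exact hyx⟩

/-- Graded division property, in a convenient form. -/
def GrInv (𝒦 : Γ → AddSubgroup K) : Prop :=
  ∀ {γ : Γ} {x : K}, x ∈ 𝒦 γ → x ≠ 0 → ∃ y ∈ 𝒦 γ⁻¹, x * y = 1 ∧ y * x = 1

theorem wide_kernel (𝒦 : Γ → AddSubgroup K) (hone : (1 : K) ∈ 𝒦 1)
    (hmul : ∀ {γ δ : Γ} {x y : K}, x ∈ 𝒦 γ → y ∈ 𝒦 δ → x * y ∈ 𝒦 (γ * δ))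
    (hinv : GrInv 𝒦) :
    ∀ (r n : ℕ) (Q : Matrix (Fin r) (Fin n) K) (l : Fin r → Γ) (β : Fin n → Γ),
      HG 𝒦 Q l β → r < n →
      ∃ (γ : Γ) (v : Fin n → K), (∀ j, v j ∈ 𝒦 (β j * γ⁻¹)) ∧ v ≠ 0 ∧ Q *ᵥ v = 0 := by
  intro r
  induction r with
  | zero =>
    intro n Q l β hQ hn
    refine ⟨β ⟨0, hn⟩, Pi.single ⟨0, hn⟩ 1, ?_, ?_, ?_⟩
    · intro j
      by_cases hj : j = ⟨0, hn⟩
      · subst hj; simpa using hone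
      · rw [Pi.single_eq_of_ne hj]; exact zero_mem _
    · simp
    · ext i; exact i.elim0
  | succ r ih =>
    intro n Q l β hQ hn
    obtain ⟨n, rfl⟩ : ∃ n', n = n' + 1 := ⟨n - 1, by omega⟩
    by_cases h0 : ∀ j, Q 0 j = 0
    · obtain ⟨γ, v, h1, h2, h3⟩ := ih (n + 1) (fun i j => Q i.succ j) (fun i => l i.succ) β
        (fun i j => hQ _ _) (by omega)
      refine ⟨γ, v, h1, h2, ?_⟩
      ext i
      refine Fin.cases ?_ (fun i => ?_) i
      · simp [Matrix.mulVec, dotProduct, h0]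
      · exact congrFun h3 i
    · push Not at h0
      obtain ⟨c, hc⟩ := h0
      obtain ⟨y, hy, hcy, hyc⟩ := hinv (hQ 0 c) hc
      obtain ⟨γ, v, h1, h2, h3⟩ := ih n
        (fun i j => Q i.succ (c.succAbove j) - Q i.succ c * (y * Q 0 (c.succAbove j)))
        (fun i => l i.succ) (fun j => β (c.succAbove j))
        (fun i j => by
          refine sub_mem (hQ _ _) ?_
          have := hmul (hQ i.succ c) (hmul hy (hQ 0 (c.succAbove j)))
          convert this using 2
          group) (by omega)
      refine ⟨γ, c.insertNth (-(y * ∑ j, Q 0 (c.succAbove j) * v j)) v, ?_, ?_, ?_⟩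
      · intro j
        refine Fin.succAboveCases c ?_ (fun j => ?_) j
        · simp only [Fin.insertNth_apply_same]
          refine neg_mem ?_
          rw [Finset.mul_sum]
          refine sum_mem fun j _ => ?_
          have := hmul hy (hmul (hQ 0 (c.succAbove j)) (h1 j))
          convert this using 2
          group
        · simpa using h1 j
      · intro h
        apply h2
        ext j
        have := congrFun h (c.succAbove j)
        simpa using this
      · ext i
        simp only [Matrix.mulVec, dotProduct, Pi.zero_apply]
        rw [Fin.sum_univ_succAbove _ c]
        simp only [Fin.insertNth_apply_same, Fin.insertNth_apply_succAbove]
        refine Fin.cases ?_ (fun i => ?_) i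
        · rw [mul_neg, ← mul_assoc, hcy, one_mul]; simp
        · have := congrFun h3 i
          simp only [Matrix.mulVec, dotProduct, Pi.zero_apply, sub_mul,
            Finset.sum_sub_distrib] at this
          rw [sub_eq_zero] at this
          rw [this, mul_neg, Finset.mul_sum, Finset.mul_sum]
          simp [mul_assoc]

theorem kernel_of_not_unit (𝒦 : Γ → AddSubgroup K) (hone : (1 : K) ∈ 𝒦 1)
    (hmul : ∀ {γ δ : Γ} {x y : K}, x ∈ 𝒦 γ → y ∈ 𝒦 δ → x * y ∈ 𝒦 (γ * δ))
    (hinv : GrInv 𝒦) {n : ℕ} (A : Matrix (Fin n) (Fin n) K) (α β : Fin n → Γ)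
    (hA : HG 𝒦 A α β) (hu : ¬ IsUnit A) :
      ∃ (γ : Γ) (v : Fin n → K), (∀ j, v j ∈ 𝒦 (β j * γ⁻¹)) ∧ v ≠ 0 ∧ A *ᵥ v = 0 := by
  -- right inverses exist for matrices without homogeneous kernel
  have key : ∀ (A : Matrix (Fin n) (Fin n) K) (α β : Fin n → Γ), HG 𝒦 A α β →
      (¬ ∃ (γ : Γ) (v : Fin n → K), (∀ j, v j ∈ 𝒦 (β j * γ⁻¹)) ∧ v ≠ 0 ∧ A *ᵥ v = 0) →
      ∃ B : Matrix (Fin n) (Fin n) K, HG 𝒦 B β α ∧ A * B = 1 := by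
    intro A α β hA hk
    have : ∀ i : Fin n, ∃ w : Fin n → K, (∀ j, w j ∈ 𝒦 (β j * (α i)⁻¹)) ∧
        A *ᵥ w = Pi.single i 1 := by
      intro i
      obtain ⟨γ, v, h1, h2, h3⟩ := wide_kernel 𝒦 hone hmul hinv n (n + 1)
        (fun k => Fin.cons (if k = i then 1 else 0) (fun j => A k j)) α
        (Fin.cons (α i) β)
        (by
          intro k j
          refine Fin.cases ?_ (fun j => ?_) j
          · simp only [Fin.cons_zero]
            split_ifs with h
            · subst h; simpa using hone
            · exact zero_mem _
          · simpa using hA k j) (by omega)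
      have h3' : ∀ k, (if k = i then 1 else 0) * v 0 + ∑ j, A k j * v j.succ = 0 := by
        intro k
        have := congrFun h3 k
        simpa [Matrix.mulVec, dotProduct, Fin.sum_univ_succ] using this
      have hv0 : v 0 ≠ 0 := by
        intro h0
        apply hk
        refine ⟨γ, fun j => v j.succ, fun j => by simpa using h1 j.succ, ?_, ?_⟩
        · intro h
          apply h2
          ext j
          refine Fin.cases ?_ (fun j => ?_) j
          · exact h0
          · exact congrFun h j
        · ext k
          have := h3' k
          rw [h0, mul_zero, zero_add] at this
          exact this
      have hv0m := h1 0
      obtain ⟨y, hy, hy1, hy2⟩ := hinv hv0m hv0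
      refine ⟨fun j => -(v j.succ * y), fun j => ?_, ?_⟩
      · have := neg_mem (hmul (h1 j.succ) hy)
        simp only [Fin.cons_zero, Fin.cons_succ] at this
        convert this using 2
        group
      · ext k
        have := h3' k
        simp only [Matrix.mulVec, dotProduct, mul_neg, Finset.sum_neg_distrib, ← mul_assoc]
        rw [← Finset.sum_mul]
        rw [← eq_neg_iff_add_eq_zero] at this
        rw [← neg_mul, ← this, mul_assoc, hy1, mul_one, Pi.single_apply]
    choose w hw1 hw2 using this
    refine ⟨fun j i => w i j, fun j i => hw1 i j, ?_⟩
    ext k i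
    have := congrFun (hw2 i) k
    rw [Matrix.one_apply]
    rw [Pi.single_apply] at this
    exact this
  by_contra hk
  obtain ⟨B, hB, hAB⟩ := key A α β hA hk
  obtain ⟨C, hC, hBC⟩ := key B β α hB (by
    rintro ⟨γ, v, h1, h2, h3⟩
    apply h2
    have : (A * B) *ᵥ v = 0 := by rw [← Matrix.mulVec_mulVec, h3, Matrix.mulVec_zero]
    rwa [hAB, Matrix.one_mulVec] at this)
  have hAC : A = C := by
    calc A = A * (B * C) := by rw [hBC, mul_one]
      _ = C := by rw [← mul_assoc, hAB, one_mul]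
  exact hu ⟨⟨A, B, hAB, by rw [hAC]; exact hBC⟩, rfl⟩

theorem not_unit_of_kernel {n : ℕ} (A : Matrix (Fin n) (Fin n) K) (v : Fin n → K)
    (hv : v ≠ 0) (h : A *ᵥ v = 0) : ¬ IsUnit A := by
  rintro ⟨⟨A, B, h1, h2⟩, rfl⟩
  apply hv
  have : (B * A) *ᵥ v = 0 := by rw [← Matrix.mulVec_mulVec]; erw [h]; simp
  rwa [h2, Matrix.one_mulVec] at this

theorem colsum_not_unit (𝒦 : Γ → AddSubgroup K) (hone : (1 : K) ∈ 𝒦 1)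
    (hmul : ∀ {γ δ : Γ} {x y : K}, x ∈ 𝒦 γ → y ∈ 𝒦 δ → x * y ∈ 𝒦 (γ * δ))
    (hinv : GrInv 𝒦) {n : ℕ} (A B C : Matrix (Fin n) (Fin n) K) (α β : Fin n → Γ)
    (hA : HG 𝒦 A α β) (hB : HG 𝒦 B α β) (huA : ¬ IsUnit A) (huB : ¬ IsUnit B)
    (c : Fin n) (h1 : ∀ i j, j ≠ c → A i j = B i j)
    (h2 : ∀ i j, C i j = if j = c then A i j + B i j else A i j) : ¬ IsUnit C := by
  obtain ⟨γ, v, hv1, hv2, hv3⟩ := kernel_of_not_unit 𝒦 hone hmul hinv A α β hA huA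
  obtain ⟨δ, w, hw1, hw2, hw3⟩ := kernel_of_not_unit 𝒦 hone hmul hinv B α β hB huB
  by_cases hvc : v c = 0
  · apply not_unit_of_kernel C v hv2
    rw [← hv3]
    ext i
    simp only [Matrix.mulVec, dotProduct]
    refine Finset.sum_congr rfl fun j _ => ?_
    rw [h2]
    by_cases hj : j = c
    · subst hj; simp [hvc]
    · simp [hj]
  by_cases hwc : w c = 0
  · apply not_unit_of_kernel C w hw2
    rw [← hw3]
    ext i
    simp only [Matrix.mulVec, dotProduct]
    refine Finset.sum_congr rfl fun j _ => ?_
    rw [h2]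
    by_cases hj : j = c
    · subst hj; simp [hwc]
    · simp [hj, h1 i j hj]
  obtain ⟨y, hy, hy1, hy2⟩ := hinv (hv1 c) hvc
  obtain ⟨z, hz, hz1, hz2⟩ := hinv (hw1 c) hwc
  have hv : ∀ i, ∑ j, A i j * (v j * y) = 0 := by
    intro i
    have := congrFun hv3 i
    simp only [← mul_assoc, ← Finset.sum_mul]
    change (A *ᵥ v) i * y = 0
    rw [this]; simp
  have hw : ∀ i, ∑ j, B i j * (w j * z) = 0 := by
    intro i
    have := congrFun hw3 i
    simp only [← mul_assoc, ← Finset.sum_mul]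
    change (B *ᵥ w) i * z = 0
    rw [this]; simp
  apply not_unit_of_kernel C (fun j => if j = c then 1 else v j * y + w j * z)
  · intro h
    have := congrFun h c
    simp at this
  · ext i
    have := congrArg₂ (· + ·) (hv i) (hw i)
    simp only [← Finset.sum_add_distrib, add_zero] at this
    rw [Pi.zero_apply, ← this]
    simp only [Matrix.mulVec, dotProduct]
    refine Finset.sum_congr rfl fun j _ => ?_
    rw [h2]
    by_cases hj : j = c
    · subst hj; simp [hy1, hz1]
    · simp [hj, h1 i j hj, mul_add]

theorem isUnit_transpose_op {n : ℕ} (A : Matrix (Fin n) (Fin n) K) :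
    IsUnit (A.transpose.map MulOpposite.op) ↔ IsUnit A := by
  constructor
  · rintro ⟨⟨A', B, h1, h2⟩, h⟩
    simp only at h
    subst h
    refine ⟨⟨A, B.transpose.map MulOpposite.unop, ?_, ?_⟩, rfl⟩
    · ext i j
      have := congrArg MulOpposite.unop (congrFun (congrFun h2 j) i)
      simp only [Matrix.mul_apply, Matrix.one_apply, Matrix.map_apply, Matrix.transpose_apply,
        Finset.unop_sum, MulOpposite.unop_mul, MulOpposite.unop_op, apply_ite MulOpposite.unop,
        MulOpposite.unop_one, MulOpposite.unop_zero, eq_comm] at this ⊢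
      exact this
    · ext i j
      have := congrArg MulOpposite.unop (congrFun (congrFun h1 j) i)
      simp only [Matrix.mul_apply, Matrix.one_apply, Matrix.map_apply, Matrix.transpose_apply,
        Finset.unop_sum, MulOpposite.unop_mul, MulOpposite.unop_op, apply_ite MulOpposite.unop,
        MulOpposite.unop_one, MulOpposite.unop_zero, eq_comm] at this ⊢
      exact this
  · rintro ⟨⟨A, B, h1, h2⟩, rfl⟩
    refine ⟨⟨A.transpose.map MulOpposite.op, B.transpose.map MulOpposite.op, ?_, ?_⟩, rfl⟩
    · ext i j
      have := (congrFun (congrFun h2 j) i)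
      apply MulOpposite.unop_injective
      simp only [Matrix.mul_apply, Matrix.one_apply, Matrix.map_apply, Matrix.transpose_apply,
        Finset.unop_sum, MulOpposite.unop_mul, MulOpposite.unop_op, apply_ite MulOpposite.unop,
        MulOpposite.unop_one, MulOpposite.unop_zero, eq_comm] at this ⊢
      exact this
    · ext i j
      have := (congrFun (congrFun h1 j) i)
      apply MulOpposite.unop_injective
      simp only [Matrix.mul_apply, Matrix.one_apply, Matrix.map_apply, Matrix.transpose_apply,
        Finset.unop_sum, MulOpposite.unop_mul, MulOpposite.unop_op, apply_ite MulOpposite.unop,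
        MulOpposite.unop_one, MulOpposite.unop_zero, eq_comm] at this ⊢
      exact this

theorem rowsum_not_unit (𝒦 : Γ → AddSubgroup K) (hone : (1 : K) ∈ 𝒦 1)
    (hmul : ∀ {γ δ : Γ} {x y : K}, x ∈ 𝒦 γ → y ∈ 𝒦 δ → x * y ∈ 𝒦 (γ * δ))
    (hinv : GrInv 𝒦) {n : ℕ} (A B C : Matrix (Fin n) (Fin n) K) (α β : Fin n → Γ)
    (hA : HG 𝒦 A α β) (hB : HG 𝒦 B α β) (huA : ¬ IsUnit A) (huB : ¬ IsUnit B)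
    (c : Fin n) (h1 : ∀ i j, i ≠ c → A i j = B i j)
    (h2 : ∀ i j, C i j = if i = c then A i j + B i j else A i j) : ¬ IsUnit C := by
  rw [← isUnit_transpose_op] at huA huB ⊢
  let 𝒦' : Γ → AddSubgroup Kᵐᵒᵖ := fun γ =>
    (𝒦 γ⁻¹).comap (MulOpposite.opAddEquiv (α := K)).symm.toAddMonoidHom
  have hm : ∀ (γ : Γ) (x : Kᵐᵒᵖ), x ∈ 𝒦' γ ↔ x.unop ∈ 𝒦 γ⁻¹ := fun _ _ => Iff.rfl
  refine colsum_not_unit 𝒦' ?_ ?_ ?_ _ _ _ β α ?_ ?_ huA huB c ?_ ?_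
  · rw [hm]; simpa using hone
  · intro γ δ x y hx hy
    rw [hm] at *
    rw [_root_.mul_inv_rev]
    exact hmul hy hx
  · intro γ x hx hx0
    rw [hm] at hx
    obtain ⟨y, hy, hy1, hy2⟩ := hinv hx (by simpa using hx0)
    refine ⟨MulOpposite.op y, hy, ?_, ?_⟩
    · apply MulOpposite.unop_injective; simpa using hy2
    · apply MulOpposite.unop_injective; simpa using hy1
  · intro i j
    rw [hm]
    simpa using hA j i
  · intro i j
    rw [hm]
    simpa using hB j i
  · intro i j hj
    simp [h1 j i hj]
  · intro i j
    simp only [Matrix.map_apply, Matrix.transpose_apply, h2]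
    split_ifs <;> simp

end PartA

theorem partA {Γ : Type u} [Group Γ] [DecidableEq Γ] {R : Type v} [Ring R]
    (𝒜 : Γ → AddSubgroup R) (G : GrDivRingHom Γ R 𝒜) (n : ℕ) :
    ¬ IsDetSumOf 𝒜 {p : SqMat R | IsHomogSq 𝒜 p.2 ∧ ¬ IsGrFull 𝒜 p.2}
        (⟨n, (1 : Matrix (Fin n) (Fin n) R)⟩ : SqMat R) := by
  have hinv : GrInv G.grading := fun hx h0 =>
    homog_inv G.grading G.internal G.one_mem G.mul_mem hx (G.isUnit_of_ne hx h0)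
  have hmap : ∀ {m n : ℕ} (A : Matrix (Fin m) (Fin n) R) (α : Fin m → Γ) (β : Fin n → Γ),
      IsHomog 𝒜 A α β → HG G.grading (A.map G.φ) α β := fun A α β h i j => G.map_mem (h i j)
  have key : ∀ p : SqMat R,
      IsDetSumOf 𝒜 {p : SqMat R | IsHomogSq 𝒜 p.2 ∧ ¬ IsGrFull 𝒜 p.2} p →
      ¬ IsUnit (p.2.map G.φ) := by
    intro p hp
    induction hp with
    | base p hp =>
      obtain ⟨-, h⟩ := hp
      unfold IsGrFull at h
      push Not at h
      obtain ⟨r, P, Q, α, l, β, hP, hQ, hA, hr⟩ := h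
      obtain ⟨γ, v, h1, h2, h3⟩ := wide_kernel G.grading G.one_mem G.mul_mem hinv r p.1 _ l β
        (hmap Q l β hQ) hr
      apply not_unit_of_kernel _ v h2
      rw [hA, Matrix.map_mul, ← Matrix.mulVec_mulVec, h3, Matrix.mulVec_zero]
    | step A B C hA hB h ihA ihB =>
      obtain ⟨⟨α, β, h1, h2⟩, ⟨c, h3, h4⟩ | ⟨c, h3, h4⟩⟩ := h
      · refine colsum_not_unit G.grading G.one_mem G.mul_mem hinv _ _ _ α β (hmap A α β h1)
          (hmap B α β h2) ihA ihB c ?_ ?_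
        · intro i j hj; simp [h3 i j hj]
        · intro i j; simp only [Matrix.map_apply, h4]; split_ifs <;> simp
      · refine rowsum_not_unit G.grading G.one_mem G.mul_mem hinv _ _ _ α β (hmap A α β h1)
          (hmap B α β h2) ihA ihB c ?_ ?_
        · intro i j hj; simp [h3 i j hj]
        · intro i j; simp only [Matrix.map_apply, h4]; split_ifs <;> simp
  intro h
  apply key _ h
  simp


section PartB

variable {Γ : Type u} [Group Γ] {R : Type v} [Ring R]

/-- Sets of square homogeneous matrices closed under the first four ideal axioms. -/
structure Pre (𝒜 : Γ → AddSubgroup R) (I : Set (SqMat R)) : Prop where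
  hom : ∀ p ∈ I, IsHomogSq 𝒜 p.2
  i1 : ∀ {n : ℕ} (A : Matrix (Fin n) (Fin n) R),
    IsHomogSq 𝒜 A → ¬ IsGrFull 𝒜 A → (⟨n, A⟩ : SqMat R) ∈ I
  i2 : ∀ {n : ℕ} (A B C : Matrix (Fin n) (Fin n) R),
    (⟨n, A⟩ : SqMat R) ∈ I → (⟨n, B⟩ : SqMat R) ∈ I → GrDetSum 𝒜 A B C →
    (⟨n, C⟩ : SqMat R) ∈ I
  i3 : ∀ {m n : ℕ} (A : Matrix (Fin m) (Fin m) R) (B : Matrix (Fin n) (Fin n) R),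
    (⟨m, A⟩ : SqMat R) ∈ I → IsHomogSq 𝒜 B → (⟨m + n, diagSum A B⟩ : SqMat R) ∈ I
  i4 : ∀ {n : ℕ} (A : Matrix (Fin n) (Fin n) R) (e f : Equiv.Perm (Fin n)),
    (⟨n, A⟩ : SqMat R) ∈ I → (⟨n, A.submatrix ⇑e ⇑f⟩ : SqMat R) ∈ I

/-- Membership for matrices indexed by arbitrary finite types. -/
def PP (I : Set (SqMat R)) {m n : Type} (A : Matrix m n R) : Prop :=
  ∃ (k : ℕ) (e : m ≃ Fin k) (f : n ≃ Fin k),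
    (⟨k, A.submatrix e.symm f.symm⟩ : SqMat R) ∈ I

variable {𝒜 : Γ → AddSubgroup R} {I : Set (SqMat R)}

theorem PP_iff (hI : Pre 𝒜 I) {m n : Type} (A : Matrix m n R) {k : ℕ} (e : m ≃ Fin k)
    (f : n ≃ Fin k) :
    PP I A ↔ (⟨k, A.submatrix e.symm f.symm⟩ : SqMat R) ∈ I := by
  constructor
  · rintro ⟨k', e', f', h⟩
    obtain rfl : k' = k := Fin.equiv_iff_eq.mp ⟨e'.symm.trans e⟩
    have := hI.i4 _ (e.symm.trans e') (f.symm.trans f') h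
    convert this using 2
    ext i j
    simp
  · exact fun h => ⟨k, e, f, h⟩

theorem PP_fin (hI : Pre 𝒜 I) {n : ℕ} (A : Matrix (Fin n) (Fin n) R) :
    PP I A ↔ (⟨n, A⟩ : SqMat R) ∈ I :=
  PP_iff hI A (Equiv.refl _) (Equiv.refl _)

theorem PP_submatrix (hI : Pre 𝒜 I) {m n m' n' : Type} (A : Matrix m n R) (e : m' ≃ m)
    (f : n' ≃ n) : PP I (A.submatrix e f) ↔ PP I A := by
  constructor
  · rintro ⟨k, e', f', h⟩
    refine ⟨k, e.symm.trans e', f.symm.trans f', ?_⟩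
    exact h
  · rintro ⟨k, e', f', h⟩
    refine ⟨k, e.trans e', f.trans f', ?_⟩
    convert h using 2
    ext i j
    simp

theorem PP_diagSum (hI : Pre 𝒜 I) {m n : ℕ} (A : Matrix (Fin m) (Fin m) R)
    (B : Matrix (Fin n) (Fin n) R) :
    PP I (fromBlocks A 0 0 B) ↔ (⟨m + n, diagSum A B⟩ : SqMat R) ∈ I :=
  PP_iff hI _ finSumFinEquiv finSumFinEquiv

theorem isHomog_diagSum {m n m' n' : ℕ} {A : Matrix (Fin m) (Fin m') R}
    {D : Matrix (Fin n) (Fin n') R} {α : Fin m → Γ} {β : Fin m' → Γ} {α' : Fin n → Γ}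
    {β' : Fin n' → Γ} (hA : IsHomog 𝒜 A α β) (hD : IsHomog 𝒜 D α' β') :
    IsHomog 𝒜 (diagSum A D) (Sum.elim α α' ∘ finSumFinEquiv.symm)
      (Sum.elim β β' ∘ finSumFinEquiv.symm) := by
  intro i j
  obtain ⟨i, rfl⟩ := finSumFinEquiv.surjective i
  obtain ⟨j, rfl⟩ := finSumFinEquiv.surjective j
  rcases i with i | i <;> rcases j with j | j <;> simp [diagSum, zero_mem]
  · exact hA i j
  · exact hD i j

theorem grDetSum_diagSum {m n : ℕ} {A B C : Matrix (Fin m) (Fin m) R}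
    (D : Matrix (Fin n) (Fin n) R) (hD : IsHomogSq 𝒜 D) (h : GrDetSum 𝒜 A B C) :
    GrDetSum 𝒜 (diagSum A D) (diagSum B D) (diagSum C D) := by
  obtain ⟨α', β', hD⟩ := hD
  obtain ⟨⟨α, β, hA, hB⟩, h⟩ := h
  refine ⟨⟨_, _, isHomog_diagSum hA hD, isHomog_diagSum hB hD⟩, ?_⟩
  rcases h with ⟨c, h1, h2⟩ | ⟨c, h1, h2⟩
  · refine Or.inl ⟨finSumFinEquiv (Sum.inl c), ?_, ?_⟩
    · intro i j hj
      obtain ⟨i, rfl⟩ := finSumFinEquiv.surjective i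
      obtain ⟨j, rfl⟩ := finSumFinEquiv.surjective j
      rw [finSumFinEquiv.injective.ne_iff] at hj
      rcases i with i | i <;> rcases j with j | j <;> simp [diagSum]
      exact h1 i j (by simpa using hj)
    · intro i j
      obtain ⟨i, rfl⟩ := finSumFinEquiv.surjective i
      obtain ⟨j, rfl⟩ := finSumFinEquiv.surjective j
      simp only [finSumFinEquiv.injective.eq_iff]
      rcases i with i | i <;> rcases j with j | j <;> simp [diagSum, h2]
  · refine Or.inr ⟨finSumFinEquiv (Sum.inl c), ?_, ?_⟩
    · intro i j hj
      obtain ⟨i, rfl⟩ := finSumFinEquiv.surjective i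
      obtain ⟨j, rfl⟩ := finSumFinEquiv.surjective j
      rw [finSumFinEquiv.injective.ne_iff] at hj
      rcases i with i | i <;> rcases j with j | j <;> simp [diagSum]
      exact h1 i j (by simpa using hj)
    · intro i j
      obtain ⟨i, rfl⟩ := finSumFinEquiv.surjective i
      obtain ⟨j, rfl⟩ := finSumFinEquiv.surjective j
      simp only [finSumFinEquiv.injective.eq_iff]
      rcases i with i | i <;> rcases j with j | j <;> simp [diagSum, h2]

theorem grDetSum_submatrix {m : ℕ} {A B C : Matrix (Fin m) (Fin m) R}
    (e f : Equiv.Perm (Fin m)) (h : GrDetSum 𝒜 A B C) :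
    GrDetSum 𝒜 (A.submatrix e f) (B.submatrix e f) (C.submatrix e f) := by
  obtain ⟨⟨α, β, hA, hB⟩, h⟩ := h
  refine ⟨⟨α ∘ e, β ∘ f, fun i j => hA _ _, fun i j => hB _ _⟩, ?_⟩
  rcases h with ⟨c, h1, h2⟩ | ⟨c, h1, h2⟩
  · refine Or.inl ⟨f.symm c, fun i j hj => h1 _ _ (by rwa [Ne, ← Equiv.eq_symm_apply]), ?_⟩
    intro i j
    simp [h2, Equiv.eq_symm_apply]
  · refine Or.inr ⟨e.symm c, fun i j hj => h1 _ _ (by rwa [Ne, ← Equiv.eq_symm_apply]), ?_⟩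
    intro i j
    simp [h2, Equiv.eq_symm_apply]

theorem isHomogSq_diagSum {m n : ℕ} {A : Matrix (Fin m) (Fin m) R}
    {D : Matrix (Fin n) (Fin n) R} (hA : IsHomogSq 𝒜 A) (hD : IsHomogSq 𝒜 D) :
    IsHomogSq 𝒜 (diagSum A D) := by
  obtain ⟨α', β', hD⟩ := hD
  obtain ⟨α, β, hA⟩ := hA
  exact ⟨_, _, isHomog_diagSum hA hD⟩

theorem isHomogSq_one (hone : (1 : R) ∈ 𝒜 1) (n : ℕ) :
    IsHomogSq 𝒜 (1 : Matrix (Fin n) (Fin n) R) := by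
  refine ⟨fun _ => 1, fun _ => 1, fun i j => ?_⟩
  rw [Matrix.one_apply]
  split_ifs
  · simpa using hone
  · exact zero_mem _

theorem pre_detSumOf (hone : (1 : R) ∈ 𝒜 1) :
    Pre 𝒜 {p | IsDetSumOf 𝒜 {p : SqMat R | IsHomogSq 𝒜 p.2 ∧ ¬ IsGrFull 𝒜 p.2} p} where
  hom := by
    intro p hp
    induction hp with
    | base p hp => exact hp.1
    | step A B C hA hB h ihA ihB =>
      obtain ⟨⟨α, β, h1, h2⟩, ⟨c, h3, h4⟩ | ⟨c, h3, h4⟩⟩ := h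
      · refine ⟨α, β, fun i j => ?_⟩
        simp only [h4]
        split_ifs
        · exact add_mem (h1 i j) (h2 i j)
        · exact h1 i j
      · refine ⟨α, β, fun i j => ?_⟩
        simp only [h4]
        split_ifs
        · exact add_mem (h1 i j) (h2 i j)
        · exact h1 i j
  i1 := fun A h1 h2 => IsDetSumOf.base _ ⟨h1, h2⟩
  i2 := fun A B C hA hB h => IsDetSumOf.step A B C hA hB h
  i3 := by
    intro m n A B hA hB
    simp only [Set.mem_ofPred_eq] at hA ⊢
    generalize hp : (⟨m, A⟩ : SqMat R) = p at hA
    induction hA generalizing m with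
    | base p hp' =>
      subst hp
      refine .base _ ⟨isHomogSq_diagSum hp'.1 hB, ?_⟩
      have h := hp'.2
      unfold IsGrFull at h ⊢
      push Not at h ⊢
      obtain ⟨r, P, Q, α, l, β, hP, hQ, hA, hr⟩ := h
      obtain ⟨α', β', hB⟩ := hB
      refine ⟨r + n, diagSum P 1, diagSum Q B, Sum.elim α α' ∘ finSumFinEquiv.symm,
        Sum.elim l α' ∘ finSumFinEquiv.symm, Sum.elim β β' ∘ finSumFinEquiv.symm, ?_, ?_, ?_, ?_⟩
      · refine isHomog_diagSum hP fun i j => ?_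
        rw [Matrix.one_apply]
        split_ifs with h
        · subst h; simpa using hone
        · exact zero_mem _
      · exact isHomog_diagSum hQ hB
      · simp only at hA
        change diagSum A B = _
        rw [hA]
        simp only [diagSum, reindex_apply, submatrix_mul_equiv, fromBlocks_multiply]
        simp
      · simp only at hr
        change r + n < m + n
        omega
    | step A' B' C' hA' hB' h ihA ihB =>
      cases hp
      exact .step _ _ _ (ihA A' rfl) (ihB B' rfl) (grDetSum_diagSum B hB h)
  i4 := by
    intro m A e f hA
    simp only [Set.mem_ofPred_eq] at hA ⊢
    generalize hp : (⟨m, A⟩ : SqMat R) = p at hA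
    induction hA generalizing m with
    | base p hp' =>
      subst hp
      obtain ⟨⟨α, β, h0⟩, h⟩ := hp'
      refine .base _ ⟨⟨α ∘ e, β ∘ f, fun i j => h0 _ _⟩, ?_⟩
      unfold IsGrFull at h ⊢
      push Not at h ⊢
      obtain ⟨r, P, Q, α, l, β, hP, hQ, hA, hr⟩ := h
      refine ⟨r, P.submatrix e id, Q.submatrix id f, α ∘ e, l, β ∘ f, fun i j => hP _ _,
        fun i j => hQ _ _, ?_, hr⟩
      simp only at hA
      rw [hA]
      rfl
    | step A' B' C' hA' hB' h ihA ihB =>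
      cases hp
      exact .step _ _ _ (ihA A' e f rfl) (ihB B' e f rfl) (grDetSum_submatrix e f h)

theorem pre_colon (hI : Pre 𝒜 I) {n : ℕ} (B : Matrix (Fin n) (Fin n) R) (hB : IsHomogSq 𝒜 B) :
    Pre 𝒜 {p : SqMat R | IsHomogSq 𝒜 p.2 ∧ (⟨p.1 + n, diagSum p.2 B⟩ : SqMat R) ∈ I} where
  hom := fun p hp => hp.1
  i1 := fun A h1 h2 => ⟨h1, hI.i3 A B (hI.i1 A h1 h2) hB⟩
  i2 := by
    intro m A A' C hA hA' h
    refine ⟨?_, hI.i2 _ _ _ hA.2 hA'.2 (grDetSum_diagSum B hB h)⟩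
    obtain ⟨⟨α, β, h1, h2⟩, ⟨c, h3, h4⟩ | ⟨c, h3, h4⟩⟩ := h
    · refine ⟨α, β, fun i j => ?_⟩
      simp only [h4]
      split_ifs
      · exact add_mem (h1 i j) (h2 i j)
      · exact h1 i j
    · refine ⟨α, β, fun i j => ?_⟩
      simp only [h4]
      split_ifs
      · exact add_mem (h1 i j) (h2 i j)
      · exact h1 i j
  i3 := by
    intro m k A C hA hC
    refine ⟨isHomogSq_diagSum hA.1 hC, ?_⟩
    have h := hI.i3 _ C hA.2 hC
    simp only at h ⊢
    rw [← PP_fin hI] at h ⊢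
    let e : Fin (m + k + n) ≃ Fin (m + n + k) :=
      finCongr (by omega) |>.trans (Equiv.refl (Fin (m + n + k)))
    let e1 : (Fin m ⊕ Fin k) ⊕ Fin n ≃ (Fin m ⊕ Fin n) ⊕ Fin k :=
      (Equiv.sumAssoc _ _ _).trans (((Equiv.refl _).sumCongr (Equiv.sumComm _ _)).trans
        (Equiv.sumAssoc _ _ _).symm)
    let e2 : Fin (m + k + n) ≃ Fin (m + n + k) :=
      finSumFinEquiv.symm.trans ((finSumFinEquiv.symm.sumCongr (Equiv.refl _)).trans
        (e1.trans ((finSumFinEquiv.sumCongr (Equiv.refl _)).trans finSumFinEquiv)))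
    rw [← PP_submatrix hI _ e2 e2] at h
    convert h using 1
    ext i j
    obtain ⟨i, rfl⟩ := finSumFinEquiv.surjective i
    obtain ⟨j, rfl⟩ := finSumFinEquiv.surjective j
    rcases i with i | i <;> rcases j with j | j
    · obtain ⟨i, rfl⟩ := finSumFinEquiv.surjective i
      obtain ⟨j, rfl⟩ := finSumFinEquiv.surjective j
      rcases i with i | i <;> rcases j with j | j <;> simp [e2, e1, diagSum]
    · obtain ⟨i, rfl⟩ := finSumFinEquiv.surjective i
      rcases i with i | i <;> simp [e2, e1, diagSum]
    · obtain ⟨j, rfl⟩ := finSumFinEquiv.surjective j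
      rcases j with j | j <;> simp [e2, e1, diagSum]
    · simp [e2, e1, diagSum]
  i4 := by
    intro m A e f hA
    obtain ⟨⟨α, β, h0⟩, h⟩ := hA
    refine ⟨⟨α ∘ e, β ∘ f, fun i j => h0 _ _⟩, ?_⟩
    simp only at h ⊢
    rw [← PP_diagSum hI] at h ⊢
    rw [← PP_submatrix hI _ (e.sumCongr (Equiv.refl _)) (f.sumCongr (Equiv.refl _))] at h
    convert h using 1
    ext i j
    rcases i with i | i <;> rcases j with j | j <;> simp

theorem diagSum_comm_mem (hI : Pre 𝒜 I) {m n : ℕ} (A : Matrix (Fin m) (Fin m) R)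
    (B : Matrix (Fin n) (Fin n) R) (h : (⟨m + n, diagSum A B⟩ : SqMat R) ∈ I) :
    (⟨n + m, diagSum B A⟩ : SqMat R) ∈ I := by
  rw [← PP_diagSum hI] at h ⊢
  rw [← PP_submatrix hI _ (Equiv.sumComm _ _) (Equiv.sumComm _ _)] at h
  convert h using 1
  ext i j
  rcases i with i | i <;> rcases j with j | j <;> simp

theorem diagSum_one (m n : ℕ) :
    diagSum (1 : Matrix (Fin m) (Fin m) R) (1 : Matrix (Fin n) (Fin n) R) = 1 := by
  simp [diagSum]

theorem exists_prime (hone : (1 : R) ∈ 𝒜 1)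
    (h : ∀ n : ℕ, ¬ IsDetSumOf 𝒜 {p : SqMat R | IsHomogSq 𝒜 p.2 ∧ ¬ IsGrFull 𝒜 p.2}
        (⟨n, (1 : Matrix (Fin n) (Fin n) R)⟩ : SqMat R)) :
    ∃ I : Set (SqMat R), Pre 𝒜 I ∧
      (∀ n : ℕ, (⟨n, (1 : Matrix (Fin n) (Fin n) R)⟩ : SqMat R) ∉ I) ∧
      ∀ {m n : ℕ} (A : Matrix (Fin m) (Fin m) R) (B : Matrix (Fin n) (Fin n) R),
        IsHomogSq 𝒜 A → IsHomogSq 𝒜 B → (⟨m + n, diagSum A B⟩ : SqMat R) ∈ I →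
        (⟨m, A⟩ : SqMat R) ∈ I ∨ (⟨n, B⟩ : SqMat R) ∈ I := by
  obtain ⟨I, -, hmax⟩ := zorn_subset_nonempty
    {I : Set (SqMat R) | Pre 𝒜 I ∧
      ∀ n : ℕ, (⟨n, (1 : Matrix (Fin n) (Fin n) R)⟩ : SqMat R) ∉ I} (by
      intro c hc hchain hne
      refine ⟨⋃₀ c, ⟨?_, ?_⟩, fun s hs => Set.subset_sUnion_of_mem hs⟩
      · constructor
        · rintro p ⟨J, hJ, hp⟩
          exact (hc hJ).1.hom p hp
        · intro n A h1 h2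
          obtain ⟨J, hJ⟩ := hne
          exact ⟨J, hJ, (hc hJ).1.i1 A h1 h2⟩
        · rintro n A B C ⟨J, hJ, hA⟩ ⟨J', hJ', hB⟩ hC
          rcases hchain.total hJ hJ' with hle | hle
          · exact ⟨J', hJ', (hc hJ').1.i2 A B C (hle hA) hB hC⟩
          · exact ⟨J, hJ, (hc hJ).1.i2 A B C hA (hle hB) hC⟩
        · rintro m n A B ⟨J, hJ, hA⟩ hB
          exact ⟨J, hJ, (hc hJ).1.i3 A B hA hB⟩
        · rintro n A e f ⟨J, hJ, hA⟩
          exact ⟨J, hJ, (hc hJ).1.i4 A e f hA⟩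
      · rintro n ⟨J, hJ, hA⟩
        exact (hc hJ).2 n hA) _ ⟨pre_detSumOf hone, h⟩
  obtain ⟨hI, hno⟩ := hmax.prop
  have hsub : ∀ {n : ℕ} (B : Matrix (Fin n) (Fin n) R), IsHomogSq 𝒜 B →
      (∀ k : ℕ, (⟨k + n, diagSum (1 : Matrix (Fin k) (Fin k) R) B⟩ : SqMat R) ∉ I) →
      ∀ {m : ℕ} (A : Matrix (Fin m) (Fin m) R), IsHomogSq 𝒜 A →
        (⟨m + n, diagSum A B⟩ : SqMat R) ∈ I → (⟨m, A⟩ : SqMat R) ∈ I := by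
    intro n B hB hk m A hA hAB
    refine hmax.le_of_ge (y := {p : SqMat R | IsHomogSq 𝒜 p.2 ∧
      (⟨p.1 + n, diagSum p.2 B⟩ : SqMat R) ∈ I}) ⟨pre_colon hI B hB, fun k hk' => hk k hk'.2⟩
      (fun p hp => ⟨hI.hom p hp, hI.i3 p.2 B hp hB⟩) ⟨hA, hAB⟩
  refine ⟨I, hI, hno, ?_⟩
  intro m n A B hA hB hAB
  by_cases hk : ∀ k : ℕ, (⟨k + n, diagSum (1 : Matrix (Fin k) (Fin k) R) B⟩ : SqMat R) ∉ I
  · exact Or.inl (hsub B hB hk A hA hAB)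
  · push Not at hk
    obtain ⟨k, hk⟩ := hk
    refine Or.inr (hsub 1 (isHomogSq_one hone k) ?_ B hB (diagSum_comm_mem hI _ _ hk))
    intro l hl
    rw [diagSum_one] at hl
    exact hno _ hl

end PartB


section PartC

variable {Γ : Type u} [Group Γ] {R : Type v} [Ring R]

/-- A prime matrix ideal together with the basic properties of the grading. -/
structure GP (𝒜 : Γ → AddSubgroup R) (I : Set (SqMat R)) : Prop where
  pre : Pre 𝒜 I
  no_one : ∀ n : ℕ, (⟨n, (1 : Matrix (Fin n) (Fin n) R)⟩ : SqMat R) ∉ I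
  prime : ∀ {m n : ℕ} (A : Matrix (Fin m) (Fin m) R) (B : Matrix (Fin n) (Fin n) R),
        IsHomogSq 𝒜 A → IsHomogSq 𝒜 B → (⟨m + n, diagSum A B⟩ : SqMat R) ∈ I →
        (⟨m, A⟩ : SqMat R) ∈ I ∨ (⟨n, B⟩ : SqMat R) ∈ I
  one_mem : (1 : R) ∈ 𝒜 1
  mul_mem : ∀ {γ δ : Γ} {x y : R}, x ∈ 𝒜 γ → y ∈ 𝒜 δ → x * y ∈ 𝒜 (γ * δ)

variable {𝒜 : Γ → AddSubgroup R} {I : Set (SqMat R)}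

section HGlemmas

variable {m n k l : Type*}

theorem HG.mul (H : GP 𝒜 I) [Fintype l] {A : Matrix m l R} {B : Matrix l n R} {α : m → Γ}
    {μ : l → Γ} {β : n → Γ} (hA : HG 𝒜 A α μ) (hB : HG 𝒜 B μ β) : HG 𝒜 (A * B) α β := by
  intro i j
  rw [Matrix.mul_apply]
  refine sum_mem fun x _ => ?_
  have := H.mul_mem (hA i x) (hB x j)
  convert this using 2
  group

theorem HG.one (H : GP 𝒜 I) [DecidableEq m] {α : m → Γ} :
    HG 𝒜 (1 : Matrix m m R) α α := by
  intro i j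
  rw [Matrix.one_apply]
  split_ifs with h
  · subst h; simpa using H.one_mem
  · exact zero_mem _

theorem HG.zero {α : m → Γ} {β : n → Γ} : HG 𝒜 (0 : Matrix m n R) α β :=
  fun _ _ => zero_mem _

theorem HG.neg {A : Matrix m n R} {α : m → Γ} {β : n → Γ} (hA : HG 𝒜 A α β) :
    HG 𝒜 (-A) α β := fun i j => neg_mem (hA i j)

theorem HG.add {A B : Matrix m n R} {α : m → Γ} {β : n → Γ} (hA : HG 𝒜 A α β)
    (hB : HG 𝒜 B α β) : HG 𝒜 (A + B) α β := fun i j => add_mem (hA i j) (hB i j)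

theorem HG.blocks {A : Matrix m n R} {B : Matrix m l R} {C : Matrix k n R} {D : Matrix k l R}
    {α : m → Γ} {β : n → Γ} {α' : k → Γ} {β' : l → Γ} (hA : HG 𝒜 A α β) (hB : HG 𝒜 B α β')
    (hC : HG 𝒜 C α' β) (hD : HG 𝒜 D α' β') :
    HG 𝒜 (fromBlocks A B C D) (Sum.elim α α') (Sum.elim β β') := by
  rintro (i | i) (j | j)
  · exact hA i j
  · exact hB i j
  · exact hC i j
  · exact hD i j

theorem HG.rows {A : Matrix m n R} {C : Matrix k n R}
    {α : m → Γ} {β : n → Γ} {α' : k → Γ} (hA : HG 𝒜 A α β)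
    (hC : HG 𝒜 C α' β) :
    HG 𝒜 (fromRows A C) (Sum.elim α α') β := by
  rintro (i | i) j
  · exact hA i j
  · exact hC i j

theorem HG.cols {A : Matrix m n R} {B : Matrix m l R}
    {α : m → Γ} {β : n → Γ} {β' : l → Γ} (hA : HG 𝒜 A α β) (hB : HG 𝒜 B α β') :
    HG 𝒜 (fromCols A B) α (Sum.elim β β') := by
  rintro i (j | j)
  · exact hA i j
  · exact hB i j

theorem HG.shift {A : Matrix m n R} {α : m → Γ} {β : n → Γ} (hA : HG 𝒜 A α β) (δ : Γ) :
    HG 𝒜 A (fun i => α i * δ) (fun j => β j * δ) := by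
  intro i j
  have := hA i j
  convert this using 2
  group

theorem HG.sub {A : Matrix m n R} {α : m → Γ} {β : n → Γ} (hA : HG 𝒜 A α β) (e : k → m)
    (f : l → n) : HG 𝒜 (A.submatrix e f) (α ∘ e) (β ∘ f) := fun i j => hA _ _

end HGlemmas

variable {m n k l m' n' k' l' : Type}

theorem PP_nonfull (H : GP 𝒜 I) [Fintype m] [Fintype n] [Fintype l] {A : Matrix m n R}
    (L : Matrix m l R) (Q : Matrix l n R) {α : m → Γ} {μ : l → Γ} {β : n → Γ}
    (hL : HG 𝒜 L α μ) (hQ : HG 𝒜 Q μ β) (hA : A = L * Q)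
    (h1 : Fintype.card m = Fintype.card n) (h2 : Fintype.card l < Fintype.card m) : PP I A := by
  classical
  let e := Fintype.equivFin m
  let f : n ≃ Fin (Fintype.card m) := (Fintype.equivFin n).trans (finCongr h1.symm)
  let g := Fintype.equivFin l
  refine ⟨_, e, f, H.pre.i1 _ ⟨α ∘ e.symm, β ∘ f.symm, ?_⟩ ?_⟩
  · rw [hA]
    exact (hL.mul H hQ).sub _ _
  · intro h
    have := h _ (L.submatrix e.symm g.symm) (Q.submatrix g.symm f.symm) (α ∘ e.symm)
      (μ ∘ g.symm) (β ∘ f.symm) (hL.sub _ _) (hQ.sub _ _) (by rw [hA, submatrix_mul_equiv])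
    omega

theorem PP_col (H : GP 𝒜 I) [DecidableEq n] {A B C : Matrix m n R} {α : m → Γ} {β : n → Γ}
    (hA : HG 𝒜 A α β) (hB : HG 𝒜 B α β) (pA : PP I A) (pB : PP I B) (c : n)
    (h1 : ∀ i j, j ≠ c → A i j = B i j)
    (h2 : ∀ i j, C i j = if j = c then A i j + B i j else A i j) : PP I C := by
  obtain ⟨q, e, f, pA⟩ := pA
  rw [PP_iff H.pre B e f] at pB
  refine ⟨q, e, f, H.pre.i2 _ _ _ pA pB ⟨⟨α ∘ e.symm, β ∘ f.symm, hA.sub _ _, hB.sub _ _⟩,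
    Or.inl ⟨f c, ?_, ?_⟩⟩⟩
  · intro i j hj
    exact h1 _ _ (by rwa [Ne, Equiv.symm_apply_eq])
  · intro i j
    simp [h2, Equiv.symm_apply_eq]

theorem PP_row (H : GP 𝒜 I) [DecidableEq m] {A B C : Matrix m n R} {α : m → Γ} {β : n → Γ}
    (hA : HG 𝒜 A α β) (hB : HG 𝒜 B α β) (pA : PP I A) (pB : PP I B) (c : m)
    (h1 : ∀ i j, i ≠ c → A i j = B i j)
    (h2 : ∀ i j, C i j = if i = c then A i j + B i j else A i j) : PP I C := by
  obtain ⟨q, e, f, pA⟩ := pA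
  rw [PP_iff H.pre B e f] at pB
  refine ⟨q, e, f, H.pre.i2 _ _ _ pA pB ⟨⟨α ∘ e.symm, β ∘ f.symm, hA.sub _ _, hB.sub _ _⟩,
    Or.inr ⟨e c, ?_, ?_⟩⟩⟩
  · intro i j hj
    exact h1 _ _ (by rwa [Ne, Equiv.symm_apply_eq])
  · intro i j
    simp [h2, Equiv.symm_apply_eq]

theorem PP_diag (H : GP 𝒜 I) [Fintype k] [Fintype l] {A : Matrix m n R} {B : Matrix k l R}
    {α : k → Γ} {β : l → Γ} (hB : HG 𝒜 B α β) (hc : Fintype.card k = Fintype.card l)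
    (pA : PP I A) : PP I (fromBlocks A 0 0 B) := by
  classical
  obtain ⟨q, e, f, pA⟩ := pA
  let g := Fintype.equivFin k
  let h : l ≃ Fin (Fintype.card k) := (Fintype.equivFin l).trans (finCongr hc.symm)
  have := H.pre.i3 _ (B.submatrix g.symm h.symm) pA ⟨_, _, hB.sub _ _⟩
  rw [← PP_diagSum H.pre] at this
  rw [← PP_submatrix H.pre _ (e.sumCongr g) (f.sumCongr h)] at this
  convert this using 1
  ext i j
  rcases i with i | i <;> rcases j with j | j <;> simp

theorem PP_swap (H : GP 𝒜 I) {A : Matrix m n R} {B : Matrix m l R} {C : Matrix k n R}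
    {D : Matrix k l R} (h : PP I (fromBlocks A B C D)) : PP I (fromBlocks D C B A) := by
  rw [← PP_submatrix H.pre _ (Equiv.sumComm _ _) (Equiv.sumComm _ _)] at h
  convert h using 1
  ext i j
  rcases i with i | i <;> rcases j with j | j <;> simp

theorem PP_swap_cols (H : GP 𝒜 I) {A : Matrix m n R} {B : Matrix m l R} {C : Matrix k n R}
    {D : Matrix k l R} (h : PP I (fromBlocks A B C D)) : PP I (fromBlocks B A D C) := by
  rw [← PP_submatrix H.pre _ (Equiv.refl _) (Equiv.sumComm _ _)] at h
  convert h using 1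
  ext i j
  rcases i with i | i <;> rcases j with j | j <;> simp

theorem PP_prime (H : GP 𝒜 I) [Fintype m] [Fintype n] [Fintype k] [Fintype l]
    {A : Matrix m n R} {B : Matrix k l R}
    {α' : m → Γ} {β' : n → Γ} (hA : HG 𝒜 A α' β') (hc' : Fintype.card m = Fintype.card n)
    {α : k → Γ} {β : l → Γ} (hB : HG 𝒜 B α β) (hc : Fintype.card k = Fintype.card l)
    (p : PP I (fromBlocks A 0 0 B)) : PP I A ∨ PP I B := by
  classical
  let e := Fintype.equivFin m
  let f : n ≃ Fin (Fintype.card m) := (Fintype.equivFin n).trans (finCongr hc'.symm)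
  let g := Fintype.equivFin k
  let h : l ≃ Fin (Fintype.card k) := (Fintype.equivFin l).trans (finCongr hc.symm)
  have := H.prime (A.submatrix e.symm f.symm) (B.submatrix g.symm h.symm) ⟨_, _, hA.sub _ _⟩
    ⟨_, _, hB.sub _ _⟩ (by
      rw [← PP_diagSum H.pre]
      rw [← PP_submatrix H.pre _ (e.symm.sumCongr g.symm) (f.symm.sumCongr h.symm)] at p
      convert p using 1
      ext i j
      rcases i with i | i <;> rcases j with j | j <;> simp)
  rcases this with h | h
  · exact Or.inl ⟨_, _, _, h⟩
  · exact Or.inr ⟨_, _, _, h⟩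

theorem not_PP_one (H : GP 𝒜 I) [Fintype m] [DecidableEq m] : ¬ PP I (1 : Matrix m m R) := by
  rw [PP_iff H.pre _ (Fintype.equivFin m) (Fintype.equivFin m)]
  simpa using H.no_one _

theorem PP_cols_add (H : GP 𝒜 I) [Fintype l] [DecidableEq l] {M : Matrix m k R}
    {N D : Matrix m l R} {α : m → Γ} {β : k → Γ} {β' : l → Γ} (hM : HG 𝒜 M α β)
    (hN : HG 𝒜 N α β') (hD : HG 𝒜 D α β') (p : PP I (fromCols M N))
    (hnf : ∀ (j : l) (N' : Matrix m l R), HG 𝒜 N' α β' → (∀ i, N' i j = D i j) →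
      PP I (fromCols M N')) :
    PP I (fromCols M (N + D)) := by
  classical
  have key : ∀ s : Finset l,
      PP I (fromCols M (N + Matrix.of fun i j => if j ∈ s then D i j else 0)) := by
    intro s
    induction s using Finset.induction_on with
    | empty =>
      convert p using 1
      ext i j
      rcases j with j | j <;> simp
    | insert a s ha ih =>
      have h1 : HG 𝒜 (N + Matrix.of fun i j => if j ∈ s then D i j else 0) α β' := by
        refine hN.add fun i j => ?_
        simp only [Matrix.of_apply]
        split_ifs
        · exact hD i j
        · exact zero_mem _
      set N1 := (N + Matrix.of fun i j => if j ∈ s then D i j else 0) with hN1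
      have h2 : HG 𝒜 (Matrix.of fun i j => if j = a then D i j else N1 i j) α β' := by
        intro i j
        simp only [Matrix.of_apply]
        split_ifs
        · exact hD i j
        · exact h1 i j
      refine PP_col H (hM.cols h1) (hM.cols h2) ih (hnf a _ h2 (by simp)) (Sum.inr a) ?_ ?_
      · rintro i (j | j) hj
        · simp
        · have : j ≠ a := by simpa using hj
          simp [this]
      · rintro i (j | j)
        · simp
        · by_cases hj : j = a
          · subst hj; simp [N1, ha]
          · simp [hj, N1]
  convert key Finset.univ using 2
  ext i j
  simp

/-- Selection matrix. -/
theorem sel_mul {R : Type v} [Ring R] [Fintype l] [DecidableEq l] (N : Matrix m l R) (j : l) :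
    (N.submatrix id (Subtype.val : {x // x ≠ j} → l)) *
      ((1 : Matrix l l R).submatrix (Subtype.val : {x // x ≠ j} → l) id) =
      Matrix.of fun i x => if x = j then 0 else N i x := by
  ext i x
  simp only [Matrix.mul_apply, Matrix.submatrix_apply, Matrix.one_apply, id, Matrix.of_apply]
  by_cases hx : x = j
  · subst hx
    simp only [if_true]
    refine Finset.sum_eq_zero fun y _ => ?_
    rw [if_neg y.2, mul_zero]
  · rw [if_neg hx, Finset.sum_eq_single (⟨x, hx⟩ : {x // x ≠ j})]
    · simp
    · intro b _ hb
      have : b.1 ≠ x := fun h => hb (Subtype.ext h)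
      simp [this]
    · simp

theorem PP_colop (H : GP 𝒜 I) [Fintype m] [Fintype k] [Fintype l] {M : Matrix m k R}
    {N : Matrix m l R} {C : Matrix k l R} {α : m → Γ} {β : k → Γ} {β' : l → Γ}
    (hM : HG 𝒜 M α β) (hN : HG 𝒜 N α β') (hC : HG 𝒜 C β β')
    (hc : Fintype.card m = Fintype.card k + Fintype.card l)
    (p : PP I (fromCols M N)) : PP I (fromCols M (N + M * C)) := by
  classical
  refine PP_cols_add H hM hN (hM.mul H hC) p ?_
  intro j N' hN' hj
  refine PP_nonfull H
    (fromCols M (N'.submatrix id (Subtype.val : {x // x ≠ j} → l)))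
    (fromBlocks 1 (Matrix.of fun i x => if x = j then C i x else 0) 0
      ((1 : Matrix l l R).submatrix (Subtype.val : {x // x ≠ j} → l) id))
    (μ := Sum.elim β (β' ∘ Subtype.val)) (hM.cols (hN'.sub _ _))
    (HG.blocks (HG.one H) ?_ HG.zero ((HG.one H).sub _ _)) ?_ ?_ ?_
  · intro i x
    simp only [Matrix.of_apply]
    split_ifs
    · exact hC i x
    · exact zero_mem _
  · rw [fromCols_mul_fromBlocks, sel_mul]
    simp only [mul_one, mul_zero, add_zero, Matrix.mul_one, Matrix.mul_zero]
    congr 1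
    ext i x
    simp only [Matrix.add_apply, Matrix.mul_apply, Matrix.of_apply]
    by_cases hx : x = j
    · subst hx; simp [hj, Matrix.mul_apply]
    · simp [hx]
  · simp [hc]
  · have : 0 < Fintype.card l := Fintype.card_pos_iff.mpr ⟨j⟩
    simp only [Fintype.card_sum, Fintype.card_subtype_compl, Fintype.card_unique, hc]
    omega

theorem PP_tri (H : GP 𝒜 I) [Fintype m] [Fintype n] [Fintype k] [Fintype l]
    {A : Matrix m n R} {B : Matrix k l R} {C D : Matrix m l R}
    {α : m → Γ} {β : n → Γ} {α' : k → Γ} {β' : l → Γ}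
    (hA : HG 𝒜 A α β) (hB : HG 𝒜 B α' β') (hC : HG 𝒜 C α β') (hD : HG 𝒜 D α β')
    (hc : Fintype.card m = Fintype.card n) (hc' : Fintype.card k = Fintype.card l)
    (p : PP I (fromBlocks A C 0 B)) : PP I (fromBlocks A (C + D) 0 B) := by
  classical
  have e1 : ∀ E : Matrix m l R, fromBlocks A E 0 B = fromCols (fromRows A 0) (fromRows E B) := by
    intro E; ext i j; rcases i with i | i <;> rcases j with j | j <;> simp
  have e2 : fromRows (C + D) B = fromRows C B + fromRows D 0 := by
    ext i j; rcases i with i | i <;> simp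
  rw [e1] at p ⊢
  rw [e2]
  refine PP_cols_add H (hA.rows HG.zero) (hC.rows hB) (hD.rows HG.zero) p ?_
  intro j N' hN' hj
  refine PP_nonfull H
    (fromBlocks (1 : Matrix m m R) 0 0
      (N'.submatrix Sum.inr (Subtype.val : {x // x ≠ j} → l)))
    (fromBlocks A (N'.submatrix Sum.inl id) 0
      ((1 : Matrix l l R).submatrix (Subtype.val : {x // x ≠ j} → l) id))
    (μ := Sum.elim α (β' ∘ Subtype.val))
    (HG.blocks (HG.one H) HG.zero HG.zero (hN'.sub Sum.inr _))
    (HG.blocks hA (hN'.sub Sum.inl id) HG.zero ((HG.one H).sub _ _)) ?_ ?_ ?_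
  · have := sel_mul (N'.submatrix Sum.inr id) j
    rw [submatrix_submatrix] at this
    simp only [Function.comp_id, Function.id_comp] at this
    rw [fromBlocks_multiply, this]
    ext i x
    rcases i with i | i <;> rcases x with x | x <;> simp
    rintro rfl
    simp [hj]
  · simp [hc, hc']
  · have : 0 < Fintype.card l := Fintype.card_pos_iff.mpr ⟨j⟩
    simp only [Fintype.card_sum, Fintype.card_subtype_compl, Fintype.card_unique, hc']
    omega

theorem PP_tri_iff (H : GP 𝒜 I) [Fintype m] [Fintype n] [Fintype k] [Fintype l]
    {A : Matrix m n R} {B : Matrix k l R} {C : Matrix m l R}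
    {α : m → Γ} {β : n → Γ} {α' : k → Γ} {β' : l → Γ}
    (hA : HG 𝒜 A α β) (hB : HG 𝒜 B α' β') (hC : HG 𝒜 C α β')
    (hc : Fintype.card m = Fintype.card n) (hc' : Fintype.card k = Fintype.card l) :
    PP I (fromBlocks A C 0 B) ↔ PP I A ∨ PP I B := by
  constructor
  · intro p
    have := PP_tri H hA hB hC hC.neg hc hc' p
    rw [add_neg_cancel] at this
    exact PP_prime H hA hc hB hc' this
  · intro p
    have h : PP I (fromBlocks A 0 0 B) := by
      rcases p with p | p
      · exact PP_diag H hB hc' p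
      · exact PP_swap H (PP_diag H hA hc p)
    simpa using PP_tri H hA hB HG.zero hC hc hc' h

theorem PP_mul_neg (H : GP 𝒜 I) [Fintype m] [Fintype n] [Fintype k]
    {X : Matrix m n R} {Y : Matrix n k R} {α : m → Γ} {μ : n → Γ} {β : k → Γ}
    (hX : HG 𝒜 X α μ) (hY : HG 𝒜 Y μ β) (hc : Fintype.card m = Fintype.card n)
    (hc' : Fintype.card n = Fintype.card k) (p : PP I X ∨ PP I Y) : PP I (-(X * Y)) := by
  classical
  have h1 := (PP_tri_iff H hY hX (HG.one H) hc' hc).2 p.symm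
  have h2 := PP_swap_cols H h1
  have e : ∀ (E : Matrix n k R) (F : Matrix m k R), fromBlocks (1 : Matrix n n R) E X F = fromCols (fromRows 1 X) (fromRows E F) := by
    intro E F; ext i j; rcases i with i | i <;> rcases j with j | j <;> simp
  rw [e] at h2
  have h3 := PP_colop H (C := -Y) ((HG.one H).rows hX) (hY.rows HG.zero) hY.neg
    (by simp [hc, hc']) h2
  have h4 : PP I (fromBlocks (1 : Matrix n n R) 0 X (-(X * Y))) := by
    rw [e]
    convert h3 using 2
    ext i j
    rcases i with i | i <;> simp [fromRows_mul]
  rcases (PP_tri_iff H (hX.mul H hY).neg (HG.one H) hX (hc.trans hc') rfl).1 (PP_swap H h4) with h | h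
  · exact h
  · exact absurd h (not_PP_one H)

theorem PP_mul (H : GP 𝒜 I) [Fintype m] [Fintype n] [Fintype k]
    {X : Matrix m n R} {Y : Matrix n k R} {α : m → Γ} {μ : n → Γ} {β : k → Γ}
    (hX : HG 𝒜 X α μ) (hY : HG 𝒜 Y μ β) (hc : Fintype.card m = Fintype.card n)
    (hc' : Fintype.card n = Fintype.card k) (p : PP I X ∨ PP I Y) : PP I (X * Y) := by
  classical
  have h1 := PP_mul_neg H hX hY hc hc' p
  have h2 := PP_mul_neg H (hX.mul H hY).neg (HG.one H) (hc.trans hc') rfl (Or.inl h1)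
  simpa using h2

end PartC


section PartD

set_option linter.unusedSectionVars false

variable {Γ : Type u} [Group Γ] {R : Type v} [Ring R]

/-- A formal fraction `F A⁻¹ X` of degree `γ`, with index type `ι`. -/
structure RT (𝒜 : Γ → AddSubgroup R) (I : Set (SqMat R)) (γ : Γ) (ι : Type) where
  A : Matrix ι ι R
  F : Matrix Unit ι R
  X : Matrix ι Unit R
  α : ι → Γ
  β : ι → Γ
  hA : HG 𝒜 A α β
  hF : HG 𝒜 F (fun _ => γ) β
  hX : HG 𝒜 X α (fun _ => 1)
  nP : ¬ PP I A

variable {𝒜 : Γ → AddSubgroup R} {I : Set (SqMat R)} {γ δ ε : Γ} {ι κ μ ν : Type}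

/-- The formal fraction vanishes. -/
def RT.Z (t : RT 𝒜 I γ ι) : Prop := PP I (fromBlocks t.A t.X t.F 0)

/-- Negative. -/
def RT.neg (t : RT 𝒜 I γ ι) : RT 𝒜 I γ ι :=
  { t with F := -t.F, hF := t.hF.neg }

section
variable [Fintype ι] [Fintype κ] [Fintype μ] [Fintype ν]

/-- Sum. -/
def RT.add (H : GP 𝒜 I) (a : RT 𝒜 I γ ι) (b : RT 𝒜 I γ κ) : RT 𝒜 I γ (ι ⊕ κ) where
  A := fromBlocks a.A 0 0 b.A
  F := fromCols a.F b.F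
  X := fromRows a.X b.X
  α := Sum.elim a.α b.α
  β := Sum.elim a.β b.β
  hA := a.hA.blocks HG.zero HG.zero b.hA
  hF := a.hF.cols b.hF
  hX := a.hX.rows b.hX
  nP := fun h => (PP_prime H a.hA rfl b.hA rfl h).elim a.nP b.nP

theorem RT.hbord (a : RT 𝒜 I γ ι) : HG 𝒜 (fromBlocks a.A a.X a.F 0)
    (Sum.elim a.α (fun _ => γ)) (Sum.elim a.β (fun _ => 1)) :=
  a.hA.blocks a.hX a.hF HG.zero

theorem RT.W1 (H : GP 𝒜 I) (a : RT 𝒜 I γ ι) (b : RT 𝒜 I γ κ) :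
    PP I (fromBlocks (fromBlocks a.A 0 0 b.A) (fromRows a.X b.X)
      (fromCols a.F (0 : Matrix Unit κ R)) (0 : Matrix Unit Unit R)) ↔ a.Z := by
  have h := PP_tri_iff H (C := fromCols 0 b.X) b.hA a.hbord (HG.zero.cols b.hX) rfl rfl
  rw [← PP_submatrix H.pre _ (((Equiv.sumComm ι κ).sumCongr (Equiv.refl Unit)).trans
    (Equiv.sumAssoc _ _ _)) (((Equiv.sumComm ι κ).sumCongr (Equiv.refl Unit)).trans
    (Equiv.sumAssoc _ _ _))] at h
  rw [or_iff_right b.nP] at h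
  rw [RT.Z, ← h]
  refine iff_of_eq (congrArg _ ?_)
  ext i j
  rcases i with (i | i) | i <;> rcases j with (j | j) | j <;> simp

theorem RT.W2 (H : GP 𝒜 I) (a : RT 𝒜 I γ ι) (b : RT 𝒜 I γ κ) :
    PP I (fromBlocks (fromBlocks a.A 0 0 b.A) (fromRows a.X b.X)
      (fromCols (0 : Matrix Unit ι R) b.F) (0 : Matrix Unit Unit R)) ↔ b.Z := by
  have h := PP_tri_iff H (C := fromCols 0 a.X) a.hA b.hbord (HG.zero.cols a.hX) rfl rfl
  rw [← PP_submatrix H.pre _ (Equiv.sumAssoc _ _ _) (Equiv.sumAssoc _ _ _)] at h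
  rw [or_iff_right a.nP] at h
  rw [RT.Z, ← h]
  refine iff_of_eq (congrArg _ ?_)
  ext i j
  rcases i with (i | i) | i <;> rcases j with (j | j) | j <;> simp

theorem RT.Z_row (H : GP 𝒜 I) (a : RT 𝒜 I γ ι) (b : RT 𝒜 I γ κ)
    {f1 f2 : Matrix Unit ι R} {g1 g2 : Matrix Unit κ R}
    (hf1 : HG 𝒜 f1 (fun _ => γ) a.β) (hf2 : HG 𝒜 f2 (fun _ => γ) a.β)
    (hg1 : HG 𝒜 g1 (fun _ => γ) b.β) (hg2 : HG 𝒜 g2 (fun _ => γ) b.β)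
    (h1 : PP I (fromBlocks (fromBlocks a.A 0 0 b.A) (fromRows a.X b.X)
      (fromCols f1 g1) (0 : Matrix Unit Unit R)))
    (h2 : PP I (fromBlocks (fromBlocks a.A 0 0 b.A) (fromRows a.X b.X)
      (fromCols f2 g2) (0 : Matrix Unit Unit R))) :
    PP I (fromBlocks (fromBlocks a.A 0 0 b.A) (fromRows a.X b.X)
      (fromCols (f1 + f2) (g1 + g2)) (0 : Matrix Unit Unit R)) := by
  classical
  refine PP_row H
    ((a.hA.blocks HG.zero HG.zero b.hA).blocks (a.hX.rows b.hX) (hf1.cols hg1) HG.zero)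
    ((a.hA.blocks HG.zero HG.zero b.hA).blocks (a.hX.rows b.hX) (hf2.cols hg2) HG.zero)
    h1 h2 (Sum.inr ()) ?_ ?_
  · rintro (i | i) j hi
    · rcases j with j | j <;> simp
    · exact absurd rfl hi
  · rintro (i | i) j
    · rcases j with j | j <;> simp
    · rcases j with (j | j) | j <;> simp

theorem RT.Z_neg (H : GP 𝒜 I) {a : RT 𝒜 I γ ι} (h : a.Z) : a.neg.Z := by
  classical
  have := PP_mul H (X := fromBlocks (1 : Matrix ι ι R) 0 0 (-1 : Matrix Unit Unit R))
    ((HG.one H).blocks HG.zero HG.zero (HG.one H).neg) a.hbord rfl rfl (Or.inr h)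
  simpa [fromBlocks_multiply, RT.Z, RT.neg] using this

theorem RT.neg_neg (a : RT 𝒜 I γ ι) : a.neg.neg = a := by
  simp [RT.neg]

theorem RT.Z_add (H : GP 𝒜 I) {a : RT 𝒜 I γ ι} {b : RT 𝒜 I γ κ} (ha : a.Z) (hb : b.Z) :
    (a.add H b).Z := by
  have := RT.Z_row H a b a.hF HG.zero HG.zero b.hF ((RT.W1 H a b).2 ha) ((RT.W2 H a b).2 hb)
  rwa [add_zero, zero_add] at this

theorem RT.Z_cancel1 (H : GP 𝒜 I) {a : RT 𝒜 I γ ι} {b : RT 𝒜 I γ κ} (h : (a.add H b).Z)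
    (hb : b.Z) : a.Z := by
  have := RT.Z_row H a b a.hF HG.zero b.hF b.hF.neg h ((RT.W2 H a b.neg).2 (RT.Z_neg H hb))
  rw [add_zero, add_neg_cancel] at this
  exact (RT.W1 H a b).1 this

theorem RT.Z_cancel2 (H : GP 𝒜 I) {a : RT 𝒜 I γ ι} {b : RT 𝒜 I γ κ} (h : (a.add H b).Z)
    (ha : a.Z) : b.Z := by
  have := RT.Z_row H a b a.hF a.hF.neg b.hF HG.zero h ((RT.W1 H a.neg b).2 (RT.Z_neg H ha))
  rw [add_zero, add_neg_cancel] at this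
  exact (RT.W2 H a b).1 this

/-- Difference is zero. -/
def RT.rel (H : GP 𝒜 I) (a : RT 𝒜 I γ ι) (b : RT 𝒜 I γ κ) : Prop := (a.add H b.neg).Z

/-- Intertwiners. -/
def RT.Tw (a : RT 𝒜 I γ ι) (b : RT 𝒜 I γ κ) : Prop :=
  ∃ U V : Matrix κ ι R, HG 𝒜 U b.α a.α ∧ HG 𝒜 V b.β a.β ∧ b.A * V = U * a.A ∧ b.F * V = a.F ∧
    U * a.X = b.X

theorem RT.Tw.rel (H : GP 𝒜 I) {a : RT 𝒜 I γ ι} {b : RT 𝒜 I γ κ} (h : a.Tw b) : a.rel H b := by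
  classical
  obtain ⟨U, V, hU, hV, h1, h2, h3⟩ := h
  refine PP_nonfull H (l := ι ⊕ κ)
    (fromRows (fromBlocks 1 0 U b.A) (fromCols 0 (-b.F)))
    (fromCols (fromBlocks a.A 0 (-V) 1) (fromRows a.X 0)) (μ := Sum.elim a.α b.β)
    (((HG.one H).blocks HG.zero hU b.hA).rows (HG.zero.cols b.hF.neg))
    ((a.hA.blocks HG.zero hV.neg (HG.one H)).cols (a.hX.rows HG.zero)) ?_ rfl ?_
  · rw [fromRows_mul_fromCols, fromBlocks_multiply, fromBlocks_mul_fromRows,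
      fromCols_mul_fromBlocks, fromCols_mul_fromRows]
    simp [RT.add, RT.neg, h1, h2, h3]
  · simp

theorem RT.Tw.Z_iff (H : GP 𝒜 I) {a : RT 𝒜 I γ ι} {b : RT 𝒜 I γ κ} (h : a.Tw b) : a.Z ↔ b.Z := by
  have := h.rel H
  constructor
  · intro ha
    have := RT.Z_neg H (RT.Z_cancel2 H this ha)
    rwa [RT.neg_neg] at this
  · intro hb
    exact RT.Z_cancel1 H this (RT.Z_neg H hb)
end
end PartD


section PartE
set_option linter.unusedSectionVars false
variable {Γ : Type u} [Group Γ] {R : Type v} [Ring R]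

variable {𝒜 : Γ → AddSubgroup R} {I : Set (SqMat R)} {γ δ ε : Γ} {ι κ μ ν : Type}
variable [Fintype ι] [Fintype κ] [Fintype μ] [Fintype ν]

theorem HG.congr {m n : Type*} {A : Matrix m n R} {α α' : m → Γ} {β β' : n → Γ}
    (h : HG 𝒜 A α β) (h1 : α = α') (h2 : β = β') : HG 𝒜 A α' β' := by
  subst h1 h2; exact h

theorem RT.rel_refl (H : GP 𝒜 I) (a : RT 𝒜 I γ ι) : a.rel H a := by
  classical
  exact RT.Tw.rel H ⟨1, 1, HG.one H, HG.one H, by simp, by simp, by simp⟩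

theorem RT.rel_symm (H : GP 𝒜 I) {a : RT 𝒜 I γ ι} {b : RT 𝒜 I γ κ} (h : a.rel H b) :
    b.rel H a := by
  classical
  have h1 := RT.Z_neg H h
  refine (RT.Tw.Z_iff H ?_).1 h1
  refine ⟨fromBlocks 0 1 1 0, fromBlocks 0 1 1 0,
    HG.zero.blocks (HG.one H) (HG.one H) HG.zero, HG.zero.blocks (HG.one H) (HG.one H) HG.zero,
    ?_, ?_, ?_⟩
  · simp [RT.add, RT.neg, fromBlocks_multiply]
  · simp [RT.add, RT.neg, fromCols_mul_fromBlocks]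
  · simp [RT.add, RT.neg, fromBlocks_mul_fromRows]

/-- Auxiliary. -/
def RT.pad (H : GP 𝒜 I) (a : RT 𝒜 I γ ι) (b : RT 𝒜 I γ κ) : RT 𝒜 I γ (ι ⊕ κ) :=
  { a.add H b with F := fromCols a.F 0, hF := a.hF.cols HG.zero }

theorem RT.rel_trans (H : GP 𝒜 I) {a : RT 𝒜 I γ ι} {b : RT 𝒜 I γ κ} {c : RT 𝒜 I γ μ}
    (h : a.rel H b) (h' : b.rel H c) : a.rel H c := by
  classical
  have h1 := RT.Z_add H h h'
  have t1 : RT.Tw ((a.add H c.neg).pad H b) ((a.add H b.neg).add H (b.add H c.neg)) := by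
    refine ⟨fromBlocks (fromBlocks 1 0 0 0) (fromRows 0 1) (fromBlocks 0 0 0 1) (fromRows 1 0),
      fromBlocks (fromBlocks 1 0 0 0) (fromRows 0 1) (fromBlocks 0 0 0 1) (fromRows 1 0),
      HG.blocks (HG.blocks (HG.one H) HG.zero HG.zero HG.zero) (HG.rows HG.zero (HG.one H))
       (HG.blocks HG.zero HG.zero HG.zero (HG.one H)) (HG.rows (HG.one H) HG.zero),
      HG.blocks (HG.blocks (HG.one H) HG.zero HG.zero HG.zero) (HG.rows HG.zero (HG.one H))
       (HG.blocks HG.zero HG.zero HG.zero (HG.one H)) (HG.rows (HG.one H) HG.zero), ?_, ?_, ?_⟩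
    · simp [RT.add, RT.neg, RT.pad, fromBlocks_multiply, fromBlocks_mul_fromRows, fromRows_mul]
    · simp [RT.add, RT.neg, RT.pad, fromCols_mul_fromBlocks, fromCols_mul_fromRows]
      ext i j
      rcases j with (j | j) | j <;> simp
    · simp [RT.add, RT.neg, RT.pad, fromBlocks_mul_fromRows, fromRows_mul]
      ext i j
      rcases i with (i | i) | (i | i) <;> simp
  have t2 : RT.Tw ((a.add H c.neg).pad H b) (a.add H c.neg) := by
    refine ⟨fromCols 1 0, fromCols 1 0, HG.cols (HG.one H) HG.zero, HG.cols (HG.one H) HG.zero,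
      ?_, ?_, ?_⟩
    · simp [RT.pad, RT.add, fromCols_mul_fromBlocks, mul_fromCols]
    · simp [RT.pad, RT.add, mul_fromCols]
    · simp [RT.pad, RT.add, fromCols_mul_fromRows]
  exact (t2.Z_iff H).1 ((t1.Z_iff H).2 h1)

/-- Zero. -/
def RT.zero (H : GP 𝒜 I) (γ : Γ) : RT 𝒜 I γ Empty where
  A := 1
  F := 0
  X := 0
  α := fun _ => 1
  β := fun _ => 1
  hA := HG.one H
  hF := HG.zero
  hX := HG.zero
  nP := not_PP_one H

theorem RT.Z_zero (H : GP 𝒜 I) : (RT.zero H γ).Z := by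
  refine PP_nonfull H (l := Empty) 0 0 (α := fun _ => 1) (μ := fun _ => 1) (β := fun _ => 1)
    HG.zero HG.zero ?_ rfl (by simp)
  ext (i | i) (j | j)
  · exact i.elim
  · exact i.elim
  · exact j.elim
  · simp

theorem RT.rel_zero_iff (H : GP 𝒜 I) (a : RT 𝒜 I γ ι) : a.rel H (RT.zero H γ) ↔ a.Z :=
  ⟨fun h => RT.Z_cancel1 H h (RT.Z_neg H (RT.Z_zero H)),
    fun h => RT.Z_add H h (RT.Z_neg H (RT.Z_zero H))⟩

theorem RT.rel_neg (H : GP 𝒜 I) {a : RT 𝒜 I γ ι} {b : RT 𝒜 I γ κ} (h : a.rel H b) :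
    a.neg.rel H b.neg := by
  have := RT.Z_neg H h
  simpa [RT.rel, RT.Z, RT.add, RT.neg] using this

theorem RT.rel_add (H : GP 𝒜 I) {κ' ι' : Type} [Fintype κ'] [Fintype ι']
    {a : RT 𝒜 I γ ι} {a' : RT 𝒜 I γ ι'} {b : RT 𝒜 I γ κ} {b' : RT 𝒜 I γ κ'}
    (h : a.rel H a') (h' : b.rel H b') : (a.add H b).rel H (a'.add H b') := by
  classical
  have h1 := RT.Z_add H h h'
  refine (RT.Tw.Z_iff H ?_).1 h1
  refine ⟨fromBlocks (fromBlocks 1 0 0 0) (fromBlocks 0 0 1 0) (fromBlocks 0 1 0 0)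
    (fromBlocks 0 0 0 1), fromBlocks (fromBlocks 1 0 0 0) (fromBlocks 0 0 1 0)
    (fromBlocks 0 1 0 0) (fromBlocks 0 0 0 1), ?_, ?_, ?_, ?_, ?_⟩
  · exact HG.blocks (HG.blocks (HG.one H) HG.zero HG.zero HG.zero)
      (HG.blocks HG.zero HG.zero (HG.one H) HG.zero) (HG.blocks HG.zero (HG.one H) HG.zero HG.zero)
      (HG.blocks HG.zero HG.zero HG.zero (HG.one H))
  · exact HG.blocks (HG.blocks (HG.one H) HG.zero HG.zero HG.zero)
      (HG.blocks HG.zero HG.zero (HG.one H) HG.zero) (HG.blocks HG.zero (HG.one H) HG.zero HG.zero)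
      (HG.blocks HG.zero HG.zero HG.zero (HG.one H))
  · simp [RT.add, RT.neg, fromBlocks_multiply]
  · simp [RT.add, RT.neg, fromCols_mul_fromBlocks]
    ext i j
    rcases j with (j | j) | (j | j) <;> simp
  · simp [RT.add, RT.neg, fromBlocks_mul_fromRows]
    ext i j
    rcases i with (i | i) | (i | i) <;> simp

theorem RT.tw_comm (H : GP 𝒜 I) (a : RT 𝒜 I γ ι) (b : RT 𝒜 I γ κ) :
    (a.add H b).Tw (b.add H a) := by
  classical
  refine ⟨fromBlocks 0 1 1 0, fromBlocks 0 1 1 0,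
    HG.zero.blocks (HG.one H) (HG.one H) HG.zero, HG.zero.blocks (HG.one H) (HG.one H) HG.zero,
    ?_, ?_, ?_⟩
  · simp [RT.add, fromBlocks_multiply]
  · simp [RT.add, fromCols_mul_fromBlocks]
  · simp [RT.add, fromBlocks_mul_fromRows]

theorem RT.tw_zero_add (H : GP 𝒜 I) (a : RT 𝒜 I γ ι) :
    ((RT.zero H γ).add H a).Tw a := by
  classical
  refine ⟨fromCols 0 1, fromCols 0 1, HG.cols HG.zero (HG.one H), HG.cols HG.zero (HG.one H),
    ?_, ?_, ?_⟩
  · simp [RT.add, fromCols_mul_fromBlocks, mul_fromCols]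
  · simp [RT.add, mul_fromCols, RT.zero]
  · simp [RT.add, fromCols_mul_fromRows]

theorem RT.tw_assoc (H : GP 𝒜 I) (a : RT 𝒜 I γ ι) (b : RT 𝒜 I γ κ) (c : RT 𝒜 I γ μ) :
    ((a.add H b).add H c).Tw (a.add H (b.add H c)) := by
  classical
  refine ⟨fromBlocks (fromCols 1 0) 0 (fromBlocks 0 1 0 0) (fromRows 0 1),
    fromBlocks (fromCols 1 0) 0 (fromBlocks 0 1 0 0) (fromRows 0 1), ?_, ?_, ?_, ?_, ?_⟩
  · exact HG.blocks (HG.cols (HG.one H) HG.zero) HG.zero (HG.blocks HG.zero (HG.one H) HG.zero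
      HG.zero) (HG.rows HG.zero (HG.one H))
  · exact HG.blocks (HG.cols (HG.one H) HG.zero) HG.zero (HG.blocks HG.zero (HG.one H) HG.zero
      HG.zero) (HG.rows HG.zero (HG.one H))
  · simp [RT.add, fromBlocks_multiply, fromCols_mul_fromBlocks, mul_fromCols,
      fromBlocks_mul_fromRows, fromRows_mul]
  · simp [RT.add, fromCols_mul_fromBlocks, fromCols_mul_fromRows, mul_fromCols]
    ext i j
    rcases j with (j | j) | j <;> simp
  · simp [RT.add, fromBlocks_mul_fromRows, fromCols_mul_fromRows, fromRows_mul]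
    ext i j
    rcases i with i | (i | i) <;> simp

end PartE


section PartF
set_option linter.unusedSectionVars false
variable {Γ : Type u} [Group Γ] {R : Type v} [Ring R]

variable {𝒜 : Γ → AddSubgroup R} {I : Set (SqMat R)} {γ δ ε : Γ} {ι κ μ ν : Type}
variable [Fintype ι] [Fintype κ] [Fintype μ] [Fintype ν]

theorem RT.hXG (H : GP 𝒜 I) (a : RT 𝒜 I γ ι) (b : RT 𝒜 I δ κ) :
    HG 𝒜 (a.X * b.F) (fun i => a.α i * δ) b.β :=
  HG.mul H ((a.hX.shift δ).congr rfl (by simp)) b.hF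

/-- Product. -/
def RT.mul (H : GP 𝒜 I) (a : RT 𝒜 I γ ι) (b : RT 𝒜 I δ κ) : RT 𝒜 I (γ * δ) (ι ⊕ κ) where
  A := fromBlocks a.A (-(a.X * b.F)) 0 b.A
  F := fromCols a.F 0
  X := fromRows 0 b.X
  α := Sum.elim (fun i => a.α i * δ) b.α
  β := Sum.elim (fun i => a.β i * δ) b.β
  hA := (a.hA.shift δ).blocks (a.hXG H b).neg HG.zero b.hA
  hF := (a.hF.shift δ).cols HG.zero
  hX := HG.zero.rows b.hX
  nP := fun h => ((PP_tri_iff H (a.hA.shift δ) b.hA (a.hXG H b).neg rfl rfl).1 h).elim a.nP b.nP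

theorem RT.Z_mul_left (H : GP 𝒜 I) {a : RT 𝒜 I γ ι} (b : RT 𝒜 I δ κ) (h : a.Z) :
    (a.mul H b).Z := by
  classical
  have h1 := PP_diag H (HG.one H (m := κ) (α := b.α)) rfl h
  have h2 := PP_mul H (Y := fromBlocks (fromBlocks (1 : Matrix ι ι R) 0 0 (-b.F)) 0
      (fromCols 0 b.A) b.X)
    ((a.hbord.shift δ).blocks HG.zero HG.zero (HG.one H))
    (((((HG.one H (α := a.β)).shift δ).blocks HG.zero HG.zero (b.hF.neg.congr (α' := fun _ => 1 * δ)
      (by simp) rfl)).congr (by ext (i | i) <;> rfl) rfl).blocks HG.zero (HG.zero.cols b.hA) b.hX)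
    rfl (by simp; ring) (Or.inl h1)
  rw [← PP_submatrix H.pre _ (((Equiv.refl ι).sumCongr (Equiv.sumComm κ Unit)) |>.trans
    (Equiv.sumAssoc _ _ _).symm |> (Equiv.sumAssoc _ _ _).trans) (Equiv.refl _)] at h2
  rw [RT.Z]
  convert h2 using 1
  rw [fromBlocks_multiply]
  ext i j
  rcases i with (i | i) | i <;> rcases j with (j | j) | j <;>
    simp [RT.mul, fromBlocks_multiply, fromBlocks_mul_fromRows]

theorem RT.Z_mul_right (H : GP 𝒜 I) (a : RT 𝒜 I γ ι) {b : RT 𝒜 I δ κ} (h : b.Z) :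
    (a.mul H b).Z := by
  classical
  have h1 := PP_swap H (PP_diag H (HG.one H (m := ι) (α := fun i => a.β i * δ)) rfl h)
  have h2 := PP_mul H (X := fromBlocks a.A (fromCols 0 (-a.X)) (fromRows 0 a.F)
      (fromBlocks (1 : Matrix κ κ R) 0 0 0))
    (α := Sum.elim (fun i => a.α i * δ) (Sum.elim b.α (fun _ => γ * δ)))
    ((a.hA.shift δ).blocks (HG.zero.cols ((a.hX.shift δ).neg.congr rfl (by simp)))
      (HG.zero.rows (a.hF.shift δ)) ((HG.one H).blocks HG.zero HG.zero HG.zero))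
    (((HG.one H).blocks HG.zero HG.zero b.hbord))
    rfl rfl (Or.inr h1)
  rw [← PP_submatrix H.pre _ (Equiv.sumAssoc _ _ _) (Equiv.sumAssoc _ _ _)] at h2
  rw [RT.Z]
  convert h2 using 1
  rw [fromBlocks_multiply]
  ext i j
  rcases i with (i | i) | i <;> rcases j with (j | j) | j <;>
    simp [RT.mul, fromBlocks_multiply, fromCols_mul_fromBlocks]

end PartF


section PartG
set_option linter.unusedSectionVars false
variable {Γ : Type u} [Group Γ] {R : Type v} [Ring R]

variable {𝒜 : Γ → AddSubgroup R} {I : Set (SqMat R)} {γ δ ε : Γ} {ι κ μ ν : Type}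
variable [Fintype ι] [Fintype κ] [Fintype μ] [Fintype ν]

theorem RT.tw_ldist (H : GP 𝒜 I) (a : RT 𝒜 I γ ι) (b : RT 𝒜 I δ κ) (b' : RT 𝒜 I δ μ) :
    ((a.mul H b).add H (a.mul H b')).Tw (a.mul H (b.add H b')) := by
  classical
  have e : a.X * fromCols b.F b'.F = fromCols (a.X * b.F) (a.X * b'.F) := mul_fromCols _ _ _
  refine ⟨fromBlocks (fromCols 1 0) (fromCols 1 0) (fromBlocks 0 1 0 0) (fromBlocks 0 0 0 1),
    fromBlocks (fromCols 1 0) (fromCols 1 0) (fromBlocks 0 1 0 0) (fromBlocks 0 0 0 1),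
    ?_, ?_, ?_, ?_, ?_⟩
  · exact HG.blocks (HG.cols (HG.one H) HG.zero) (HG.cols (HG.one H) HG.zero)
      (HG.blocks HG.zero (HG.one H) HG.zero HG.zero) (HG.blocks HG.zero HG.zero HG.zero (HG.one H))
  · exact HG.blocks (HG.cols (HG.one H) HG.zero) (HG.cols (HG.one H) HG.zero)
      (HG.blocks HG.zero (HG.one H) HG.zero HG.zero) (HG.blocks HG.zero HG.zero HG.zero (HG.one H))
  · simp only [RT.add, RT.mul, e]
    simp only [fromBlocks_multiply, fromCols_mul_fromBlocks, mul_fromCols, Matrix.neg_mul]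
    congr 1 <;> ext i j <;> (try rcases i with i | i) <;> rcases j with j | j <;> simp
  · simp only [RT.add, RT.mul, fromCols_mul_fromBlocks, mul_fromCols]
    ext i j
    rcases j with (j | j) | (j | j) <;> simp
  · simp only [RT.add, RT.mul, fromBlocks_mul_fromRows, fromCols_mul_fromRows]
    ext i j
    rcases i with i | (i | i) <;> simp

theorem RT.tw_ldist_neg (H : GP 𝒜 I) (a : RT 𝒜 I γ ι) (b : RT 𝒜 I δ κ) (b' : RT 𝒜 I δ μ) :
    ((a.mul H b).add H (a.mul H b').neg).Tw (a.mul H (b.add H b'.neg)) := by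
  classical
  have e : a.X * fromCols b.F (-b'.F) = fromCols (a.X * b.F) (-(a.X * b'.F)) := by
    rw [mul_fromCols, Matrix.mul_neg]
  refine ⟨fromBlocks (fromCols 1 0) (fromCols (-1) 0) (fromBlocks 0 1 0 0) (fromBlocks 0 0 0 1),
    fromBlocks (fromCols 1 0) (fromCols (-1) 0) (fromBlocks 0 1 0 0) (fromBlocks 0 0 0 1),
    ?_, ?_, ?_, ?_, ?_⟩
  · exact HG.blocks (HG.cols (HG.one H) HG.zero) (HG.cols (HG.one H).neg HG.zero)
      (HG.blocks HG.zero (HG.one H) HG.zero HG.zero) (HG.blocks HG.zero HG.zero HG.zero (HG.one H))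
  · exact HG.blocks (HG.cols (HG.one H) HG.zero) (HG.cols (HG.one H).neg HG.zero)
      (HG.blocks HG.zero (HG.one H) HG.zero HG.zero) (HG.blocks HG.zero HG.zero HG.zero (HG.one H))
  · simp only [RT.add, RT.mul, RT.neg, e]
    simp only [fromBlocks_multiply, fromCols_mul_fromBlocks, mul_fromCols, Matrix.neg_mul]
    congr 1 <;> ext i j <;> (try rcases i with i | i) <;> rcases j with j | j <;> simp
  · simp only [RT.add, RT.mul, RT.neg, fromCols_mul_fromBlocks, mul_fromCols]
    ext i j
    rcases j with (j | j) | (j | j) <;> simp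
  · simp only [RT.add, RT.mul, RT.neg, fromBlocks_mul_fromRows, fromCols_mul_fromRows]
    ext i j
    rcases i with i | (i | i) <;> simp

theorem RT.tw_rdist (H : GP 𝒜 I) (a : RT 𝒜 I γ ι) (a' : RT 𝒜 I γ μ) (b : RT 𝒜 I δ κ) :
    ((a.add H a').mul H b).Tw ((a.mul H b).add H (a'.mul H b)) := by
  classical
  have e : fromRows a.X a'.X * b.F = fromRows (a.X * b.F) (a'.X * b.F) := fromRows_mul _ _ _
  refine ⟨fromBlocks (fromBlocks 1 0 0 0) (fromRows 0 1) (fromBlocks 0 1 0 0) (fromRows 0 1),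
    fromBlocks (fromBlocks 1 0 0 0) (fromRows 0 1) (fromBlocks 0 1 0 0) (fromRows 0 1),
    ?_, ?_, ?_, ?_, ?_⟩
  · refine (HG.blocks (α := Sum.elim (fun i => a.α i * δ) b.α)
      (α' := Sum.elim (fun i => a'.α i * δ) b.α)
      (β := Sum.elim (fun i => a.α i * δ) (fun i => a'.α i * δ)) (β' := b.α) ?_ ?_ ?_ ?_).congr
      rfl ?_
    · exact HG.blocks (HG.one H) HG.zero HG.zero HG.zero
    · exact HG.rows HG.zero (HG.one H)
    · exact HG.blocks HG.zero (HG.one H) HG.zero HG.zero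
    · exact HG.rows HG.zero (HG.one H)
    · ext ((i | i) | i) <;> rfl
  · refine (HG.blocks (α := Sum.elim (fun i => a.β i * δ) b.β)
      (α' := Sum.elim (fun i => a'.β i * δ) b.β)
      (β := Sum.elim (fun i => a.β i * δ) (fun i => a'.β i * δ)) (β' := b.β) ?_ ?_ ?_ ?_).congr
      rfl ?_
    · exact HG.blocks (HG.one H) HG.zero HG.zero HG.zero
    · exact HG.rows HG.zero (HG.one H)
    · exact HG.blocks HG.zero (HG.one H) HG.zero HG.zero
    · exact HG.rows HG.zero (HG.one H)
    · ext ((i | i) | i) <;> rfl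
  · simp only [RT.add, RT.mul, e]
    simp only [fromBlocks_multiply, fromBlocks_mul_fromRows, fromRows_mul]
    congr 1 <;> ext i j <;> rcases i with i | i <;> (try rcases j with j | j) <;>
      simp [fromBlocks_mul_fromRows]
  · simp only [RT.add, RT.mul, fromCols_mul_fromBlocks, fromCols_mul_fromRows]
    ext i j
    rcases j with (j | j) | j <;> simp
  · simp only [RT.add, RT.mul, fromBlocks_mul_fromRows, fromRows_mul]
    ext i j
    rcases i with (i | i) | (i | i) <;> simp

theorem RT.neg_mul (H : GP 𝒜 I) (a : RT 𝒜 I γ ι) (b : RT 𝒜 I δ κ) :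
    a.neg.mul H b = (a.mul H b).neg := by
  simp [RT.mul, RT.neg]

/-- Change of degree. -/
def RT.cast (h : γ = δ) (a : RT 𝒜 I γ ι) : RT 𝒜 I δ ι :=
  { a with hF := a.hF.congr (by rw [h]) rfl }

theorem RT.tw_mul_assoc (H : GP 𝒜 I) (a : RT 𝒜 I γ ι) (b : RT 𝒜 I δ κ) (c : RT 𝒜 I ε μ) :
    (((a.mul H b).mul H c).cast (mul_assoc γ δ ε)).Tw (a.mul H (b.mul H c)) := by
  classical
  have e1 : a.X * fromCols b.F (0 : Matrix Unit μ R) = fromCols (a.X * b.F) 0 := by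
    rw [mul_fromCols, Matrix.mul_zero]
  have e2 : fromRows (0 : Matrix ι Unit R) b.X * c.F = fromRows 0 (b.X * c.F) := by
    rw [fromRows_mul, Matrix.zero_mul]
  refine ⟨fromBlocks (fromCols 1 0) 0 (fromBlocks 0 1 0 0) (fromRows 0 1),
    fromBlocks (fromCols 1 0) 0 (fromBlocks 0 1 0 0) (fromRows 0 1), ?_, ?_, ?_, ?_, ?_⟩
  · refine (HG.blocks (α := fun i => a.α i * (δ * ε)) (α' := Sum.elim (fun i => b.α i * ε) c.α)
      (β := Sum.elim (fun i => a.α i * (δ * ε)) (fun i => b.α i * ε)) (β' := c.α)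
      ?_ ?_ ?_ ?_).congr rfl ?_
    · exact HG.cols (HG.one H) HG.zero
    · exact HG.zero
    · exact HG.blocks HG.zero (HG.one H) HG.zero HG.zero
    · exact HG.rows HG.zero (HG.one H)
    · ext ((i | i) | i) <;> simp [RT.cast, RT.mul, mul_assoc]
  · refine (HG.blocks (α := fun i => a.β i * (δ * ε)) (α' := Sum.elim (fun i => b.β i * ε) c.β)
      (β := Sum.elim (fun i => a.β i * (δ * ε)) (fun i => b.β i * ε)) (β' := c.β)
      ?_ ?_ ?_ ?_).congr rfl ?_
    · exact HG.cols (HG.one H) HG.zero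
    · exact HG.zero
    · exact HG.blocks HG.zero (HG.one H) HG.zero HG.zero
    · exact HG.rows HG.zero (HG.one H)
    · ext ((i | i) | i) <;> simp [RT.cast, RT.mul, mul_assoc]
  · simp only [RT.mul, RT.cast, e1, e2]
    simp only [fromBlocks_multiply, fromCols_mul_fromBlocks, mul_fromCols,
      fromBlocks_mul_fromRows, fromRows_mul]
    ext i j
    rcases i with i | (i | i) <;> rcases j with (j | j) | j <;>
      simp [fromCols_mul_fromBlocks, fromBlocks_mul_fromRows, fromCols_mul_fromRows]
  · simp only [RT.mul, RT.cast, fromCols_mul_fromBlocks, mul_fromCols]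
    ext i j
    rcases j with (j | j) | j <;> simp
  · simp only [RT.mul, RT.cast, fromBlocks_mul_fromRows, fromRows_mul]
    ext i j
    rcases i with i | (i | i) <;> simp

/-- Element of the ring. -/
def RT.fr (H : GP 𝒜 I) (r : R) (hr : r ∈ 𝒜 γ) : RT 𝒜 I γ Unit where
  A := 1
  F := Matrix.of fun _ _ => r
  X := 1
  α := fun _ => 1
  β := fun _ => 1
  hA := HG.one H
  hF := fun _ _ => by simpa using hr
  hX := HG.one H
  nP := not_PP_one H

theorem RT.tw_one_mul (H : GP 𝒜 I) (b : RT 𝒜 I δ κ) :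
    b.Tw (((RT.fr H 1 H.one_mem).mul H b).cast (one_mul δ)) := by
  classical
  have e : (Matrix.of fun _ _ => 1 : Matrix Unit Unit R) = 1 := by ext; simp
  refine ⟨fromRows 0 1, fromRows b.F 1, HG.rows HG.zero (HG.one H), HG.rows ?_ (HG.one H),
    ?_, ?_, ?_⟩
  · exact b.hF.congr (by simp [RT.fr]) rfl
  · simp [RT.mul, RT.cast, RT.fr, fromBlocks_mul_fromRows, fromRows_mul]
  · simp [RT.mul, RT.cast, RT.fr, fromCols_mul_fromRows, e]
  · simp [RT.mul, RT.cast, RT.fr, fromRows_mul]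

theorem RT.tw_mul_one (H : GP 𝒜 I) (b : RT 𝒜 I δ κ) :
    ((b.mul H (RT.fr H 1 H.one_mem)).cast (mul_one δ)).Tw b := by
  classical
  have e : (Matrix.of fun _ _ => 1 : Matrix Unit Unit R) = 1 := by ext; simp
  refine ⟨fromCols 1 b.X, fromCols 1 0, ?_, ?_, ?_, ?_, ?_⟩
  · exact (HG.cols (HG.one H) b.hX).congr rfl (by ext (i | i) <;> simp [RT.mul, RT.cast, RT.fr])
  · exact (HG.cols (HG.one H) HG.zero).congr rfl
      (by ext (i | i) <;> simp [RT.mul, RT.cast, RT.fr]; rfl)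
  · simp [RT.mul, RT.cast, RT.fr, fromCols_mul_fromBlocks, mul_fromCols, e]
  · simp [RT.mul, RT.cast, RT.fr, mul_fromCols]
  · simp [RT.mul, RT.cast, RT.fr, fromCols_mul_fromRows]

theorem RT.tw_fr_add (H : GP 𝒜 I) {r s : R} (hr : r ∈ 𝒜 γ) (hs : s ∈ 𝒜 γ) :
    (RT.fr H (r + s) (add_mem hr hs) : RT 𝒜 I γ Unit).Tw ((RT.fr H r hr).add H (RT.fr H s hs)) := by
  refine ⟨fromRows 1 1, fromRows 1 1, HG.rows (HG.one H) (HG.one H),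
    HG.rows (HG.one H) (HG.one H), ?_, ?_, ?_⟩
  · simp [RT.add, RT.fr, fromBlocks_mul_fromRows, fromRows_mul]
  · simp [RT.add, RT.fr, fromCols_mul_fromRows]
    rfl
  · simp [RT.add, RT.fr, fromRows_mul]

theorem RT.tw_fr_mul (H : GP 𝒜 I) {r s : R} (hr : r ∈ 𝒜 γ) (hs : s ∈ 𝒜 δ) :
    (RT.fr H (r * s) (H.mul_mem hr hs) : RT 𝒜 I (γ * δ) Unit).Tw
      ((RT.fr H r hr).mul H (RT.fr H s hs)) := by
  refine ⟨fromRows 0 1, fromRows (Matrix.of fun _ _ => s) 1, HG.rows HG.zero (HG.one H),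
    HG.rows ?_ (HG.one H), ?_, ?_, ?_⟩
  · intro i j
    simpa [RT.fr] using hs
  · simp [RT.mul, RT.fr, fromBlocks_mul_fromRows, fromRows_mul]
  · simp [RT.mul, RT.fr, fromCols_mul_fromRows]
    ext i j
    simp [Matrix.mul_apply]
  · simp [RT.mul, RT.fr, fromRows_mul]

/-- Inverse. -/
def RT.inv (H : GP 𝒜 I) (a : RT 𝒜 I γ ι) (h : ¬ a.Z) : RT 𝒜 I γ⁻¹ (ι ⊕ Unit) where
  A := fromBlocks a.A a.X a.F 0
  F := fromCols 0 1
  X := fromRows 0 (-1)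
  α := Sum.elim (fun i => a.α i * γ⁻¹) (fun _ => 1)
  β := Sum.elim (fun i => a.β i * γ⁻¹) (fun _ => γ⁻¹)
  hA := (a.hbord.shift γ⁻¹).congr (by ext (i | i) <;> simp) (by ext (i | i) <;> simp)
  hF := HG.zero.cols (HG.one H)
  hX := HG.zero.rows (HG.one H).neg
  nP := h

/-- Auxiliary. -/
def RT.inv1 (H : GP 𝒜 I) (a : RT 𝒜 I γ ι) (h : ¬ a.Z) : RT 𝒜 I 1 (ι ⊕ Unit) where
  A := fromBlocks a.A a.X a.F 0
  F := fromCols (-a.F) 0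
  X := fromRows 0 (-1)
  α := Sum.elim (fun i => a.α i * γ⁻¹) (fun _ => 1)
  β := Sum.elim (fun i => a.β i * γ⁻¹) (fun _ => γ⁻¹)
  hA := (a.hbord.shift γ⁻¹).congr (by ext (i | i) <;> simp) (by ext (i | i) <;> simp)
  hF := ((a.hF.shift γ⁻¹).congr (by simp) rfl).neg.cols HG.zero
  hX := HG.zero.rows (HG.one H).neg
  nP := h

theorem RT.tw_inv1 (H : GP 𝒜 I) (a : RT 𝒜 I γ ι) (h : ¬ a.Z) :
    (a.inv1 H h).Tw ((a.mul H (a.inv H h)).cast (mul_inv_cancel γ)) := by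
  classical
  refine ⟨fromRows (fromCols (-1) 0) 1, fromRows (fromCols (-1) 0) 1,
    HG.rows (HG.cols (HG.one H).neg HG.zero) (HG.one H),
    HG.rows (HG.cols (HG.one H).neg HG.zero) (HG.one H), ?_, ?_, ?_⟩
  · simp only [RT.mul, RT.cast, RT.inv, RT.inv1, fromBlocks_mul_fromRows, fromRows_mul,
      mul_fromCols, fromCols_mul_fromBlocks]
    congr 1
    · ext i (j | j) <;> simp
    · simp
  · simp [RT.mul, RT.cast, RT.inv, RT.inv1, mul_fromCols, fromCols_mul_fromRows]
  · simp only [RT.mul, RT.cast, RT.inv, RT.inv1, fromRows_mul, fromCols_mul_fromRows]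
    simp

theorem RT.tw_inv2 (H : GP 𝒜 I) (a : RT 𝒜 I γ ι) (h : ¬ a.Z) :
    (a.inv1 H h).Tw (RT.fr H 1 H.one_mem) := by
  classical
  have e : (Matrix.of fun _ _ => 1 : Matrix Unit Unit R) = 1 := by ext; simp
  refine ⟨fromCols 0 (-1), fromCols (-a.F) 0, HG.cols HG.zero (HG.one H).neg,
    (a.inv1 H h).hF, ?_, ?_, ?_⟩
  · simp [RT.inv1, RT.fr, fromCols_mul_fromBlocks]
  · simp [RT.inv1, RT.fr, e]
  · simp [RT.inv1, RT.fr, fromCols_mul_fromRows]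

theorem RT.not_Z_one (H : GP 𝒜 I) : ¬ (RT.fr H 1 H.one_mem : RT 𝒜 I 1 Unit).Z := by
  classical
  have e : (Matrix.of fun _ _ => 1 : Matrix Unit Unit R) = 1 := by ext; simp
  intro h
  have := PP_mul H (Y := fromBlocks (0 : Matrix Unit Unit R) 1 1 (-1 : Matrix Unit Unit R))
    (RT.hbord _) (HG.blocks (β := fun _ => 1) (β' := fun _ => 1)
      HG.zero (HG.one H) (HG.one H) (HG.one H).neg) rfl rfl (Or.inl h)
  simp [fromBlocks_multiply, RT.fr, e] at this
  exact not_PP_one H this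

end PartG


noncomputable section PartH
set_option linter.unusedSectionVars false
variable {Γ : Type u} [Group Γ] {R : Type v} [Ring R]

variable {𝒜 : Γ → AddSubgroup R} {I : Set (SqMat R)} {γ δ ε : Γ} {ι κ μ ν : Type}
variable [Fintype ι] [Fintype κ] [Fintype μ] [Fintype ν]

theorem RT.rel_mul_left (H : GP 𝒜 I) {a : RT 𝒜 I γ ι} {a' : RT 𝒜 I γ μ} (b : RT 𝒜 I δ κ)
    (h : a.rel H a') : (a.mul H b).rel H (a'.mul H b) := by
  have h1 := RT.Z_mul_left H b h
  have h2 := ((RT.tw_rdist H a a'.neg b).Z_iff H).1 h1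
  rwa [RT.neg_mul] at h2

theorem RT.rel_mul_right (H : GP 𝒜 I) (a : RT 𝒜 I γ ι) {b : RT 𝒜 I δ κ} {b' : RT 𝒜 I δ μ}
    (h : b.rel H b') : (a.mul H b).rel H (a.mul H b') :=
  ((RT.tw_ldist_neg H a b b').Z_iff H).2 (RT.Z_mul_right H a h)

/-- Reindexing. -/
def RT.reindex (H : GP 𝒜 I) (e : ι ≃ κ) (a : RT 𝒜 I γ ι) : RT 𝒜 I γ κ where
  A := a.A.submatrix e.symm e.symm
  F := a.F.submatrix id e.symm
  X := a.X.submatrix e.symm id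
  α := a.α ∘ e.symm
  β := a.β ∘ e.symm
  hA := a.hA.sub _ _
  hF := a.hF.sub _ _
  hX := a.hX.sub _ _
  nP := by rw [PP_submatrix H.pre]; exact a.nP

theorem RT.tw_reindex (H : GP 𝒜 I) (e : ι ≃ κ) (a : RT 𝒜 I γ ι) : a.Tw (a.reindex H e) := by
  classical
  refine ⟨(1 : Matrix ι ι R).submatrix e.symm id, (1 : Matrix ι ι R).submatrix e.symm id,
    (HG.one H).sub _ _, (HG.one H).sub _ _, ?_, ?_, ?_⟩
  · have h1 := submatrix_mul_equiv a.A (1 : Matrix ι ι R) e.symm e.symm id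
    have h2 := submatrix_mul_equiv (1 : Matrix ι ι R) a.A e.symm (Equiv.refl _) id
    simp only [Matrix.mul_one, Matrix.one_mul] at h1 h2
    exact h1.trans h2.symm
  · have h1 := submatrix_mul_equiv a.F (1 : Matrix ι ι R) id e.symm id
    simpa [RT.reindex] using h1
  · have h2 := submatrix_mul_equiv (1 : Matrix ι ι R) a.X e.symm (Equiv.refl _) id
    simpa [RT.reindex] using h2

/-- The setoid on fractions. -/
def KS (H : GP 𝒜 I) (γ : Γ) : Setoid (Σ n : ℕ, RT 𝒜 I γ (Fin n)) where
  r a b := a.2.rel H b.2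
  iseqv := ⟨fun a => RT.rel_refl H a.2, fun h => RT.rel_symm H h, fun h h' => RT.rel_trans H h h'⟩

/-- The component of degree `γ`. -/
def Kq (H : GP 𝒜 I) (γ : Γ) : Type (max u v) := Quotient (KS H γ)

/-- The class of a fraction. -/
def cls (H : GP 𝒜 I) (a : RT 𝒜 I γ ι) : Kq H γ :=
  Quotient.mk (KS H γ) ⟨Fintype.card ι, a.reindex H (Fintype.equivFin ι)⟩

theorem cls_eq (H : GP 𝒜 I) {a : RT 𝒜 I γ ι} {b : RT 𝒜 I γ κ} :
    cls H a = cls H b ↔ a.rel H b := by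
  have ha := (RT.tw_reindex H (Fintype.equivFin ι) a).rel H
  have hb := (RT.tw_reindex H (Fintype.equivFin κ) b).rel H
  constructor
  · intro h
    have h1 : (a.reindex H (Fintype.equivFin ι)).rel H (b.reindex H (Fintype.equivFin κ)) :=
      Quotient.exact h
    exact RT.rel_trans H ha (RT.rel_trans H h1 (RT.rel_symm H hb))
  · intro h
    exact Quotient.sound (RT.rel_trans H (RT.rel_symm H ha) (RT.rel_trans H h hb))

theorem mk_eq_cls (H : GP 𝒜 I) {n : ℕ} (a : RT 𝒜 I γ (Fin n)) :
    Quotient.mk (KS H γ) ⟨n, a⟩ = cls H a :=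
  Quotient.sound ((RT.tw_reindex H (Fintype.equivFin _) a).rel H)

theorem RT.Tw.cls {H : GP 𝒜 I} {a : RT 𝒜 I γ ι} {b : RT 𝒜 I γ κ} (h : a.Tw b) :
    cls H a = cls H b := (cls_eq H).2 (h.rel H)

theorem cls_surj (H : GP 𝒜 I) (x : Kq H γ) : ∃ (n : ℕ) (a : RT 𝒜 I γ (Fin n)), cls H a = x := by
  induction x using Quotient.inductionOn with
  | h a => exact ⟨a.1, a.2, (mk_eq_cls H a.2).symm⟩

instance (H : GP 𝒜 I) : Add (Kq H γ) :=
  ⟨Quotient.lift₂ (fun a b => cls H (a.2.add H b.2)) fun _ _ _ _ h h' =>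
    (cls_eq H).2 (RT.rel_add H h h')⟩

instance (H : GP 𝒜 I) : Neg (Kq H γ) :=
  ⟨Quotient.lift (fun a => cls H (a.2.neg)) fun _ _ h => (cls_eq H).2 (RT.rel_neg H h)⟩

instance (H : GP 𝒜 I) : Zero (Kq H γ) := ⟨cls H (RT.zero H γ)⟩

/-- Multiplication. -/
def Kq.mul (H : GP 𝒜 I) : Kq H γ → Kq H δ → Kq H (γ * δ) :=
  Quotient.lift₂ (fun a b => cls H (a.2.mul H b.2)) fun a b a' b' h h' =>
    (cls_eq H).2 (RT.rel_trans H (RT.rel_mul_left H b.2 h) (RT.rel_mul_right H a'.2 h'))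

theorem cls_add (H : GP 𝒜 I) (a : RT 𝒜 I γ ι) (b : RT 𝒜 I γ κ) :
    cls H a + cls H b = cls H (a.add H b) := by
  have ha := (RT.tw_reindex H (Fintype.equivFin ι) a).rel H
  have hb := (RT.tw_reindex H (Fintype.equivFin κ) b).rel H
  exact (cls_eq H).2 (RT.rel_symm H (RT.rel_add H ha hb))

theorem cls_neg (H : GP 𝒜 I) (a : RT 𝒜 I γ ι)  : -cls H a = cls H a.neg := by
  have ha := (RT.tw_reindex H (Fintype.equivFin ι) a).rel H
  exact (cls_eq H).2 (RT.rel_symm H (RT.rel_neg H ha))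

theorem cls_mul (H : GP 𝒜 I) (a : RT 𝒜 I γ ι) (b : RT 𝒜 I δ κ) :
    Kq.mul H (cls H a) (cls H b) = cls H (a.mul H b) := by
  have ha := (RT.tw_reindex H (Fintype.equivFin ι) a).rel H
  have hb := (RT.tw_reindex H (Fintype.equivFin κ) b).rel H
  exact (cls_eq H).2 (RT.rel_symm H
    (RT.rel_trans H (RT.rel_mul_left H b ha) (RT.rel_mul_right H _ hb)))

theorem cls_eq_zero (H : GP 𝒜 I) (a : RT 𝒜 I γ ι) : cls H a = 0 ↔ a.Z :=
  (cls_eq H).trans (RT.rel_zero_iff H a)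

instance (H : GP 𝒜 I) : AddCommGroup (Kq H γ) where
  add_assoc x y z := by
    obtain ⟨_, a, rfl⟩ := cls_surj H x
    obtain ⟨_, b, rfl⟩ := cls_surj H y
    obtain ⟨_, c, rfl⟩ := cls_surj H z
    simp only [cls_add]
    exact (RT.tw_assoc H a b c).cls
  add_comm x y := by
    obtain ⟨_, a, rfl⟩ := cls_surj H x
    obtain ⟨_, b, rfl⟩ := cls_surj H y
    simp only [cls_add]
    exact (RT.tw_comm H a b).cls
  zero_add x := by
    obtain ⟨_, a, rfl⟩ := cls_surj H x
    exact (cls_add H _ _).trans (RT.tw_zero_add H a).cls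
  add_zero x := by
    obtain ⟨_, a, rfl⟩ := cls_surj H x
    exact (cls_add H _ _).trans ((RT.tw_comm H _ _).cls.trans (RT.tw_zero_add H a).cls)
  neg_add_cancel x := by
    obtain ⟨_, a, rfl⟩ := cls_surj H x
    rw [cls_neg, cls_add, (RT.tw_comm H _ _).cls, cls_eq_zero]
    exact RT.rel_refl H a
  nsmul := nsmulRec
  zsmul := zsmulRec

theorem Kq.mul_add (H : GP 𝒜 I) (x : Kq H γ) (y z : Kq H δ) :
    Kq.mul H x (y + z) = Kq.mul H x y + Kq.mul H x z := by
  obtain ⟨_, a, rfl⟩ := cls_surj H x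
  obtain ⟨_, b, rfl⟩ := cls_surj H y
  obtain ⟨_, c, rfl⟩ := cls_surj H z
  simp only [cls_add, cls_mul]
  exact (RT.tw_ldist H a b c).cls.symm

theorem Kq.add_mul (H : GP 𝒜 I) (x y : Kq H γ) (z : Kq H δ) :
    Kq.mul H (x + y) z = Kq.mul H x z + Kq.mul H y z := by
  obtain ⟨_, a, rfl⟩ := cls_surj H x
  obtain ⟨_, b, rfl⟩ := cls_surj H y
  obtain ⟨_, c, rfl⟩ := cls_surj H z
  simp only [cls_add, cls_mul]
  exact (RT.tw_rdist H a b c).cls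

theorem sig_cast (H : GP 𝒜 I) (h : γ = δ) (a : RT 𝒜 I γ ι) :
    (⟨γ, cls H a⟩ : Σ γ : Γ, Kq H γ) = ⟨δ, cls H (a.cast h)⟩ := by
  subst h
  rfl

/-- The unit. -/
def Kq.one (H : GP 𝒜 I) : Kq H 1 := cls H (RT.fr H 1 H.one_mem)

theorem Kq.one_mul (H : GP 𝒜 I) (x : Kq H γ) :
    (⟨1 * γ, Kq.mul H (Kq.one H) x⟩ : Σ γ : Γ, Kq H γ) = ⟨γ, x⟩ := by
  obtain ⟨_, a, rfl⟩ := cls_surj H x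
  rw [Kq.one, cls_mul, sig_cast H (_root_.one_mul γ), ← (RT.tw_one_mul H a).cls]

theorem Kq.mul_one (H : GP 𝒜 I) (x : Kq H γ) :
    (⟨γ * 1, Kq.mul H x (Kq.one H)⟩ : Σ γ : Γ, Kq H γ) = ⟨γ, x⟩ := by
  obtain ⟨_, a, rfl⟩ := cls_surj H x
  rw [Kq.one, cls_mul, sig_cast H (_root_.mul_one γ), (RT.tw_mul_one H a).cls]

theorem Kq.mul_assoc (H : GP 𝒜 I) (x : Kq H γ) (y : Kq H δ) (z : Kq H ε) :
    (⟨γ * δ * ε, Kq.mul H (Kq.mul H x y) z⟩ : Σ γ : Γ, Kq H γ) =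
      ⟨γ * (δ * ε), Kq.mul H x (Kq.mul H y z)⟩ := by
  obtain ⟨_, a, rfl⟩ := cls_surj H x
  obtain ⟨_, b, rfl⟩ := cls_surj H y
  obtain ⟨_, c, rfl⟩ := cls_surj H z
  rw [cls_mul, cls_mul, cls_mul, cls_mul, sig_cast H (_root_.mul_assoc γ δ ε),
    (RT.tw_mul_assoc H a b c).cls]

theorem Kq.exists_inv (H : GP 𝒜 I) (x : Kq H γ) (hx : x ≠ 0) :
    ∃ y : Kq H γ⁻¹, y ≠ 0 ∧ (⟨γ * γ⁻¹, Kq.mul H x y⟩ : Σ γ : Γ, Kq H γ) = ⟨1, Kq.one H⟩ := by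
  obtain ⟨_, a, rfl⟩ := cls_surj H x
  rw [Ne, cls_eq_zero] at hx
  have key : (⟨γ * γ⁻¹, Kq.mul H (cls H a) (cls H (a.inv H hx))⟩ : Σ γ : Γ, Kq H γ) =
      ⟨1, Kq.one H⟩ := by
    rw [cls_mul, sig_cast H (mul_inv_cancel γ), ← (RT.tw_inv1 H a hx).cls,
      (RT.tw_inv2 H a hx).cls, Kq.one]
  refine ⟨cls H (a.inv H hx), ?_, key⟩
  intro h0
  rw [cls_eq_zero] at h0
  have h1 := RT.Z_mul_right H a h0
  have h2 : ((a.mul H (a.inv H hx)).cast (mul_inv_cancel γ)).Z := h1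
  exact RT.not_Z_one H (((RT.tw_inv2 H a hx).Z_iff H).1 (((RT.tw_inv1 H a hx).Z_iff H).2 h2))

theorem Kq.one_ne (H : GP 𝒜 I) : Kq.one H ≠ 0 := by
  rw [Kq.one, Ne, cls_eq_zero]
  exact RT.not_Z_one H

/-- The canonical map. -/
def Kq.ofR (H : GP 𝒜 I) (γ : Γ) : 𝒜 γ →+ Kq H γ :=
  AddMonoidHom.mk' (fun r => cls H (RT.fr H r.1 r.2)) fun r s => by
    rw [cls_add]
    exact (RT.tw_fr_add H r.2 s.2).cls

theorem Kq.ofR_mul (H : GP 𝒜 I) (r : 𝒜 γ) (s : 𝒜 δ) :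
    Kq.ofR H (γ * δ) ⟨r.1 * s.1, H.mul_mem r.2 s.2⟩ = Kq.mul H (Kq.ofR H γ r) (Kq.ofR H δ s) :=
  (RT.tw_fr_mul H r.2 s.2).cls.trans (cls_mul H _ _).symm

end PartH


noncomputable section PartI
set_option linter.unusedSectionVars false
variable {Γ : Type u} [Group Γ] [DecidableEq Γ] {R : Type v} [Ring R]
variable {𝒜 : Γ → AddSubgroup R} {I : Set (SqMat R)} {γ δ ε : Γ}

/-- The components, additively indexed. -/
def KA (H : GP 𝒜 I) (a : Additive Γ) : Type (max u v) := Kq H a.toMul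

instance (H : GP 𝒜 I) (a : Additive Γ) : AddCommGroup (KA H a) :=
  inferInstanceAs (AddCommGroup (Kq H a.toMul))

instance (H : GP 𝒜 I) : GradedMonoid.GOne (KA H) := ⟨Kq.one H⟩

instance (H : GP 𝒜 I) : GradedMonoid.GMul (KA H) :=
  ⟨fun {i j} x y => Kq.mul H (γ := i.toMul) (δ := j.toMul) x y⟩

instance (H : GP 𝒜 I) : GradedMonoid.GMonoid (KA H) where
  one_mul _ := Kq.one_mul H _
  mul_one _ := Kq.mul_one H _
  mul_assoc _ _ _ := Kq.mul_assoc H _ _ _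

instance (H : GP 𝒜 I) : DirectSum.GRing (KA H) where
  mul_zero {i j} x := by
    have := Kq.mul_add H (γ := i.toMul) (δ := j.toMul) x 0 0
    rw [add_zero] at this
    exact left_eq_add.1 this
  zero_mul {i j} x := by
    have := Kq.add_mul H (γ := i.toMul) (δ := j.toMul) 0 0 x
    rw [add_zero] at this
    exact left_eq_add.1 this
  mul_add x y z := Kq.mul_add H _ _ _
  add_mul x y z := Kq.add_mul H _ _ _
  natCast n := n • (Kq.one H : Kq H 1)
  natCast_zero := zero_nsmul _
  natCast_succ n := succ_nsmul _ _
  intCast n := n • (Kq.one H : Kq H 1)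
  intCast_ofNat n := natCast_zsmul _ _
  intCast_negSucc_ofNat n := negSucc_zsmul _ _

/-- The graded division ring. -/
abbrev KK (H : GP 𝒜 I) : Type (max u v) := DirectSum (Additive Γ) (KA H)

/-- Its grading. -/
def KG (H : GP 𝒜 I) (γ : Γ) : AddSubgroup (KK H) :=
  (DirectSum.of (KA H) (Additive.ofMul γ)).range

theorem KA_of_eq (H : GP 𝒜 I) {i j : Additive Γ} {x : KA H i} {y : KA H j}
    (h : (⟨i.toMul, x⟩ : Σ γ : Γ, Kq H γ) = ⟨j.toMul, y⟩) :
    DirectSum.of (KA H) i x = DirectSum.of (KA H) j y := by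
  cases h
  rfl

theorem KG_internal (H : GP 𝒜 I) : DirectSum.IsInternal (KG H) := by
  let e : ∀ i : Additive Γ, KA H i →+ KG H i.toMul := fun i =>
    (DirectSum.of (KA H) i).rangeRestrict
  let f : KK H →+ DirectSum (Additive Γ) (fun i => KG H i.toMul) :=
    DirectSum.toAddMonoid fun i => (DirectSum.of (fun i : Additive Γ => KG H i.toMul) i).comp (e i)
  let g : DirectSum (Additive Γ) (fun i => KG H i.toMul) →+ KK H :=
    DirectSum.coeAddMonoidHom (fun i : Additive Γ => KG H i.toMul)
  have h1 : g.comp f = AddMonoidHom.id _ := by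
    ext i x : 2
    simp only [f, g, AddMonoidHom.comp_apply, DirectSum.toAddMonoid_of,
      DirectSum.coeAddMonoidHom_of]
    rfl
  have h2 : f.comp g = AddMonoidHom.id _ := by
    ext i x : 2
    obtain ⟨_, ⟨x, rfl⟩⟩ := x
    simp only [f, g, AddMonoidHom.comp_apply, DirectSum.coeAddMonoidHom_of]
    erw [DirectSum.toAddMonoid_of]
    rfl
  have : Function.Bijective g := by
    refine Function.bijective_iff_has_inverse.2 ⟨f, fun x => DFunLike.congr_fun h2 x,
      fun x => DFunLike.congr_fun h1 x⟩
  exact this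

theorem KG_isUnit (H : GP 𝒜 I) {x : KK H} (hx : x ∈ KG H γ) (h0 : x ≠ 0) : IsUnit x := by
  have key : ∀ {γ : Γ} {x : KA H (Additive.ofMul γ)}, x ≠ 0 →
      ∃ y : KA H (Additive.ofMul γ⁻¹), y ≠ 0 ∧
      DirectSum.of (KA H) (Additive.ofMul γ) x * DirectSum.of (KA H) (Additive.ofMul γ⁻¹) y = 1 := by
    intro γ x hx
    obtain ⟨y, hy, h⟩ := Kq.exists_inv H (γ := γ) x hx
    refine ⟨y, hy, ?_⟩
    exact (DirectSum.of_mul_of (A := KA H) (i := Additive.ofMul γ) (j := Additive.ofMul γ⁻¹)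
      x y).trans (KA_of_eq H h)
  obtain ⟨x, rfl⟩ := hx
  have hx : x ≠ 0 := by
    rintro rfl
    exact h0 (map_zero _)
  obtain ⟨y, hy, h1⟩ := key (γ := γ) hx
  obtain ⟨z, hz, h2⟩ := key hy
  have := left_inv_eq_right_inv h1 h2
  exact ⟨⟨_, _, h1, by rw [this]; exact h2⟩, rfl⟩

/-- The canonical map. -/
def KA.ofR (H : GP 𝒜 I) (i : Additive Γ) : 𝒜 i.toMul →+ KA H i := Kq.ofR H i.toMul

/-- The graded ring homomorphism. -/
def grHom (H : GP 𝒜 I) (hintl : DirectSum.IsInternal 𝒜) : GrDivRingHom Γ R 𝒜 := by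
  let 𝒜' : Additive Γ → AddSubgroup R := fun a => 𝒜 a.toMul
  have : SetLike.GradedMonoid 𝒜' :=
    { one_mem := H.one_mem, mul_mem := fun _ _ _ _ h1 h2 => H.mul_mem h1 h2 }
  let _ : DirectSum.Decomposition 𝒜' :=
    DirectSum.IsInternal.chooseDecomposition (M := R) (ℳ := 𝒜') hintl
  let _ : GradedRing 𝒜' := { }
  let ψ : DirectSum (Additive Γ) (fun i => 𝒜' i) →+* KK H :=
    DirectSum.toSemiring (fun i => (DirectSum.of (KA H) i).comp (KA.ofR H i))
      (by rw [DirectSum.one_def]; rfl)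
      (by
        intro i j x y
        simp only [AddMonoidHom.comp_apply]
        rw [DirectSum.of_mul_of]
        exact congrArg _ (Kq.ofR_mul H x y))
  exact
  { K := KK H
    nontrivialK := by
      refine ⟨⟨1, 0, ?_⟩⟩
      rw [DirectSum.one_def]
      intro h
      rw [← map_zero (DirectSum.of (KA H) 0)] at h
      exact Kq.one_ne H (DirectSum.of_injective _ h)
    grading := KG H
    internal := KG_internal H
    one_mem := ⟨Kq.one H, rfl⟩
    mul_mem := by
      rintro γ δ _ _ ⟨x, rfl⟩ ⟨y, rfl⟩
      rw [DirectSum.of_mul_of]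
      exact ⟨_, rfl⟩
    isUnit_of_ne := fun hx h0 => KG_isUnit H hx h0
    φ := ψ.comp (DirectSum.decomposeRingEquiv 𝒜').toRingHom
    map_mem := by
      intro γ r hr
      refine ⟨KA.ofR H (Additive.ofMul γ) ⟨r, hr⟩, ?_⟩
      have h1 : (DirectSum.decomposeRingEquiv 𝒜') r =
        DirectSum.of (fun i => 𝒜' i) (Additive.ofMul γ) ⟨r, hr⟩ :=
          DirectSum.decompose_of_mem 𝒜' (i := Additive.ofMul γ) hr
      change _ = ψ ((DirectSum.decomposeRingEquiv 𝒜') r)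
      rw [h1, DirectSum.toSemiring_of]
      rfl }

end PartI

/-- Let `R` be a `Γ`-graded ring.  There exist a `Γ`-graded
division ring `K` and a homomorphism of `Γ`-graded rings `φ : R → K` if and only
if no identity matrix can be expressed as an iterated determinantal sum of square
homogeneous matrices over `R` which are not gr-full. -/
theorem exists_graded_hom_to_graded_division_ring_iff
    {Γ : Type u} [Group Γ] [DecidableEq Γ] {R : Type v} [Ring R]
    (𝒜 : Γ → AddSubgroup R)
    (hinternal : DirectSum.IsInternal 𝒜)
    (hone : (1 : R) ∈ 𝒜 1)
    (hmul : ∀ {γ δ : Γ} {x y : R}, x ∈ 𝒜 γ → y ∈ 𝒜 δ → x * y ∈ 𝒜 (γ * δ)) :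
    Nonempty (GrDivRingHom Γ R 𝒜) ↔
      ∀ n : ℕ, ¬ IsDetSumOf 𝒜 {p : SqMat R | IsHomogSq 𝒜 p.2 ∧ ¬ IsGrFull 𝒜 p.2}
        (⟨n, (1 : Matrix (Fin n) (Fin n) R)⟩ : SqMat R) := by
  refine ⟨fun ⟨G⟩ n => partA 𝒜 G n, fun h => ?_⟩
  obtain ⟨I, h1, h2, h3⟩ := exists_prime hone h
  have H : GP 𝒜 I := ⟨h1, h2, h3, hone, hmul⟩
  exact ⟨grHom H hinternal⟩
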